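/- Let 0 < p ≤ 1, let δ > n/p − (n+1)/2, and let w ∈ A_1. Suppose that δ − (n−1)/2 is not a positive integer. Then there exists a constant C > 0, independent of f and of R, such that for every 0 < R < ∞ and every f in the weighted weak Hardy space WH^p_w(R^n) one has ‖T^δ_R f‖_{WH^p_w} ≤ C ‖f‖_{WH^p_w}. -/

import Mathlib

/-!
The proof does not decompose `f` into atoms. It bounds the grand maximal function of `T_R f`
pointwise by an `L^q`-maximal function of the grand maximal function of `f`, for some `q < p`.

Dimension zero is trivial, since there `T_R` is the identity. Let `n ≥ 1`.

*The kernel.* Splitting the frequency variable into its component along `x` and the orthogonal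
ones shows that the kernel `K` of `T_1` at `x` is a constant multiple of
`∫_{-1}^1 (1 - s²)^μ cos(2π|x|s) ds` with `μ = δ + (n-1)/2`. As a function of `r = |x|` this
integral satisfies Bessel's equation, and after multiplication by `r^(μ+1)` it has an energy
comparable to a positive constant for `r ≥ 1`. Hence `|K(x)| ≤ C (1 + |x|)^(-a)` with
`a = δ + (n+1)/2` (`exists_brKernel_le`), and the averages of `|K|` over translates of a fixed
compact set of positive measure are bounded below by the same power. The lower bound shows that if
`T_R f` does not vanish almost everywhere, then `f` is measurable and integrable against
`(1 + |y|)^(-a)` (`isGood_of_brOp`). If `T_R f = 0` almost everywhere there is nothing to prove;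
otherwise Fubini's theorem applies to all convolutions involved.

*The pointwise estimate* (`exists_grandMax_brOp_le`). The hypothesis on `δ` says `a > n/p`, and the
choice of `N` together with `q_w ≥ 1` gives `N + n + 1 > n/p`; so there are `b ≤ a, N + n + 1` and
`q < p` with `n/b < q`. Put `τ = 1/R` and let `φ` be a test function. If `t ≥ τ`, then
`φ_t * T_R f = K_τ * (φ_t * f)`. If `t < τ`, then `T_R f = K_τ * (η_τ * f)` for a Schwartz function
`η` whose Fourier transform is `1` on the unit ball, and `|φ_t| * |K_τ|` obeys the bound
`C τ⁻ⁿ (1 + |y|/τ)^(-b)`, as `K_τ` does. In both cases a function `F` that is controlled by the grand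
maximal function `G f` on a ball of radius at least `τ` is averaged against this majorant. Writing
`F = F^q F^(1-q)`, estimating the second factor pointwise by `M((G f)^q)` and averaging the first
one, yields `G(T_R f) ≤ C M((G f)^q)^(1/q)` (`exists_lintegral_epk_mul_le`).

*The maximal function* (`IsA1.exists_weakNorm_bMax_le`). For `w ∈ A₁`, Vitali's covering lemma gives
the weak type `(1,1)` of `M` with respect to `w`, and a layer-cake argument then shows that
`g ↦ M(g^q)^(1/q)` is bounded on weighted weak `L^p` for `q < p`.
-/

open MeasureTheory Real Complex Set
open scoped ENNReal NNReal FourierTransform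

noncomputable section

/-- Euclidean space `ℝⁿ`. -/
abbrev Euc (n : ℕ) := EuclideanSpace ℝ (Fin n)

/-- The axis-parallel closed cube centered at `x₀` with side length `r`. -/
def cube {n : ℕ} (x₀ : Euc n) (r : ℝ) : Set (Euc n) :=
  {y | ∀ i, |y i - x₀ i| ≤ r / 2}

/-- The weighted measure `w(E) = ∫_E w(x) dx`. -/
def wMeasure {n : ℕ} (w : Euc n → ℝ) : Measure (Euc n) :=
  (volume : Measure (Euc n)).withDensity fun x => ENNReal.ofReal (w x)

/-- The Muckenhoupt class `A₁`: `w` is nonnegative, locally integrable, and the average of `w`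
over any cube is dominated by a constant times the essential infimum of `w` over that cube. -/
def IsA1 {n : ℕ} (w : Euc n → ℝ) : Prop :=
  (∀ x, 0 ≤ w x) ∧ LocallyIntegrable w volume ∧
    ∃ C : ℝ, 0 < C ∧ ∀ (x₀ : Euc n) (r : ℝ), 0 < r →
      (∫ x in cube x₀ r, w x) / r ^ n ≤ C * essInf w (volume.restrict (cube x₀ r))

/-- The Muckenhoupt class `A_q`, `1 < q < ∞`. -/
def IsAq {n : ℕ} (w : Euc n → ℝ) (q : ℝ) : Prop :=
  (∀ x, 0 ≤ w x) ∧ LocallyIntegrable w volume ∧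
    ∃ C : ℝ, 0 < C ∧ ∀ (x₀ : Euc n) (r : ℝ), 0 < r →
      ((∫ x in cube x₀ r, w x) / r ^ n) *
        ((∫ x in cube x₀ r, w x ^ (-1 / (q - 1))) / r ^ n) ^ (q - 1) ≤ C

/-- The critical index `q_w = inf {q > 1 : w ∈ A_q}` of a weight `w`. -/
def criticalIndex {n : ℕ} (w : Euc n → ℝ) : ℝ :=
  sInf {q : ℝ | 1 < q ∧ IsAq w q}

/-- The `L¹`-dilation `g_t(x) = t⁻ⁿ g(x / t)`. -/
def dil {n : ℕ} (g : Euc n → ℂ) (t : ℝ) (x : Euc n) : ℂ :=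
  ((t ^ n)⁻¹ : ℝ) • g ((t⁻¹ : ℝ) • x)

/-- The Bochner-Riesz kernel `φ` of order `δ`, i.e. the inverse Fourier transform of
`ξ ↦ (1 - |ξ|²)₊^δ`. -/
def brKernel (n : ℕ) (δ : ℝ) : Euc n → ℂ :=
  𝓕⁻ fun ξ : Euc n => (Complex.ofReal (((1 - ‖ξ‖ ^ 2) ⊔ 0) ^ δ))

/-- The Bochner-Riesz operator `T^δ_R f = φ_{1/R} * f` of order `δ`. -/
def brOp (n : ℕ) (δ R : ℝ) (f : Euc n → ℂ) (x : Euc n) : ℂ :=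
  ∫ y, dil (brKernel n δ) R⁻¹ (x - y) * f y

/-- The maximal Bochner-Riesz operator `T^δ_* f(x) = sup_{R > 0} |T^δ_R f(x)|`. -/
def maxBR (n : ℕ) (δ : ℝ) (f : Euc n → ℂ) (x : Euc n) : ℝ≥0∞ :=
  ⨆ (R : ℝ) (_ : 0 < R), (‖brOp n δ R f x‖₊ : ℝ≥0∞)

/-- Partial derivative in the `i`-th coordinate direction. -/
def pderiv' {n : ℕ} (i : Fin n) (f : Euc n → ℂ) : Euc n → ℂ :=
  fun x => fderiv ℝ f x (EuclideanSpace.single i 1)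

/-- The multi-index partial derivative `D^α f`. -/
def mderiv {n : ℕ} (α : Fin n → ℕ) (f : Euc n → ℂ) : Euc n → ℂ :=
  (((List.finRange n).map fun i => (pderiv' i)^[α i]).foldr (· ∘ ·) id) f

/-- The test function class
`𝒜_N = {φ ∈ 𝒮 : sup_x sup_{|α| ≤ N+1} (1+|x|)^{N+n+1} |D^α φ(x)| ≤ 1}`. -/
def inTestClass {n : ℕ} (N : ℕ) (φ : SchwartzMap (Euc n) ℂ) : Prop :=
  ∀ (x : Euc n) (α : Fin n → ℕ), (∑ i, α i) ≤ N + 1 →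
    (1 + ‖x‖) ^ (N + n + 1) * ‖mderiv α (⇑φ) x‖ ≤ 1

/-- The radial grand maximal function
`G⁺ f(x) = sup_{φ ∈ 𝒜_N} sup_{t > 0} |(φ_t * f)(x)|`. -/
def grandMax {n : ℕ} (N : ℕ) (f : Euc n → ℂ) (x : Euc n) : ℝ≥0∞ :=
  ⨆ (φ : SchwartzMap (Euc n) ℂ) (_ : inTestClass N φ) (t : ℝ) (_ : 0 < t),
    (‖∫ y, dil (⇑φ) t (x - y) * f y‖₊ : ℝ≥0∞)

/-- The weak `L^p` quasinorm `sup_{λ > 0} λ · μ({x : g(x) > λ})^{1/p}` of an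
`ℝ≥0∞`-valued function with respect to the measure `μ`. -/
def weakNorm {n : ℕ} (μ : Measure (Euc n)) (p : ℝ) (g : Euc n → ℝ≥0∞) : ℝ≥0∞ :=
  ⨆ (lam : ℝ≥0) (_ : 0 < lam), (lam : ℝ≥0∞) * μ {x | (lam : ℝ≥0∞) < g x} ^ (1 / p)

/-- The weak Hardy space quasinorm `‖f‖_{WH^p_w} = ‖G⁺ f‖_{WL^p_w}`, with grand maximal
function taken over the test class `𝒜_N`. -/
def whNorm {n : ℕ} (N : ℕ) (μ : Measure (Euc n)) (p : ℝ) (f : Euc n → ℂ) : ℝ≥0∞ :=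
  weakNorm μ p (grandMax N f)

/-- The Hardy-Littlewood maximal function (over cubes containing `x`). -/
def hlMax {n : ℕ} (f : Euc n → ℂ) (x : Euc n) : ℝ≥0∞ :=
  ⨆ (x₀ : Euc n) (r : ℝ) (_ : 0 < r) (_ : x ∈ cube x₀ r),
    (volume (cube x₀ r))⁻¹ * ∫⁻ y in cube x₀ r, (‖f y‖₊ : ℝ≥0∞)

/-! ### Bessel-type integrals -/

theorem hasDerivAt_cosIntegral {g : ℝ → ℝ} (hg : Continuous g) (r : ℝ) :
    HasDerivAt (fun r => ∫ s in (-1 : ℝ)..1, g s * Real.cos (2 * π * r * s))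
      (∫ s in (-1 : ℝ)..1, g s * (-(2 * π * s) * Real.sin (2 * π * r * s))) r := by
  refine (intervalIntegral.hasDerivAt_integral_of_dominated_loc_of_deriv_le (𝕜 := ℝ) (E := ℝ)
    (F := fun r s => g s * Real.cos (2 * π * r * s))
    (F' := fun x s => g s * (-(2 * π * s) * Real.sin (2 * π * x * s)))
    (bound := fun s => |g s| * |2 * π * s|) (s := univ) Filter.univ_mem ?_ ?_ ?_ ?_ ?_ ?_).2
  · exact Filter.Eventually.of_forall fun x => by
      apply Continuous.aestronglyMeasurable; fun_prop
  · apply Continuous.intervalIntegrable; fun_prop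
  · apply Continuous.aestronglyMeasurable; fun_prop
  · refine Filter.Eventually.of_forall fun s _ x _ => ?_
    rw [norm_mul, norm_mul, Real.norm_eq_abs, Real.norm_eq_abs, Real.norm_eq_abs, abs_neg]
    have := Real.abs_sin_le_one (2 * π * x * s)
    gcongr
    exact mul_le_of_le_one_right (abs_nonneg _) this
  · apply Continuous.intervalIntegrable; fun_prop
  · refine Filter.Eventually.of_forall fun s _ x _ => ?_
    have h : HasDerivAt (fun x : ℝ => 2 * π * x * s) (2 * π * s) x := by
      simpa using ((hasDerivAt_id x).const_mul (2 * π)).mul_const s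
    refine HasDerivAt.congr_deriv ((h.cos.const_mul (g s))) ?_
    ring

theorem hasDerivAt_sinIntegral {g : ℝ → ℝ} (hg : Continuous g) (r : ℝ) :
    HasDerivAt (fun r => ∫ s in (-1 : ℝ)..1, g s * Real.sin (2 * π * r * s))
      (∫ s in (-1 : ℝ)..1, g s * ((2 * π * s) * Real.cos (2 * π * r * s))) r := by
  refine (intervalIntegral.hasDerivAt_integral_of_dominated_loc_of_deriv_le (𝕜 := ℝ) (E := ℝ)
    (F := fun r s => g s * Real.sin (2 * π * r * s))
    (F' := fun x s => g s * ((2 * π * s) * Real.cos (2 * π * x * s)))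
    (bound := fun s => |g s| * |2 * π * s|) (s := univ) Filter.univ_mem ?_ ?_ ?_ ?_ ?_ ?_).2
  · exact Filter.Eventually.of_forall fun x => by
      apply Continuous.aestronglyMeasurable; fun_prop
  · apply Continuous.intervalIntegrable; fun_prop
  · apply Continuous.aestronglyMeasurable; fun_prop
  · refine Filter.Eventually.of_forall fun s _ x _ => ?_
    rw [norm_mul, norm_mul, Real.norm_eq_abs, Real.norm_eq_abs, Real.norm_eq_abs]
    have := Real.abs_cos_le_one (2 * π * x * s)
    gcongr
    exact mul_le_of_le_one_right (abs_nonneg _) this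
  · apply Continuous.intervalIntegrable; fun_prop
  · refine Filter.Eventually.of_forall fun s _ x _ => ?_
    have h : HasDerivAt (fun x : ℝ => 2 * π * x * s) (2 * π * s) x := by
      simpa using ((hasDerivAt_id x).const_mul (2 * π)).mul_const s
    refine HasDerivAt.congr_deriv ((h.sin.const_mul (g s))) ?_
    ring

/-- The Poisson integral `∫_{-1}^1 (1 - s²)^μ cos(2πrs) ds`, a normalised Bessel function of
order `μ + 1/2`. -/
def bI (μ r : ℝ) : ℝ := ∫ s in (-1 : ℝ)..1, (1 - s ^ 2) ^ μ * Real.cos (2 * π * r * s)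

/-- The derivative of `bI μ`. -/
def bI' (μ r : ℝ) : ℝ :=
  ∫ s in (-1 : ℝ)..1, (-(2 * π * s) * (1 - s ^ 2) ^ μ) * Real.sin (2 * π * r * s)

theorem continuous_weight {μ : ℝ} (hμ : 0 < μ) : Continuous fun s : ℝ => (1 - s ^ 2) ^ μ :=
  Continuous.rpow_const (by fun_prop) fun _ => Or.inr hμ.le

theorem hasDerivAt_bI {μ : ℝ} (hμ : 0 < μ) (r : ℝ) : HasDerivAt (bI μ) (bI' μ r) r := by
  refine HasDerivAt.congr_deriv (hasDerivAt_cosIntegral (continuous_weight hμ) r) ?_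
  unfold bI'
  congr 1; ext s; ring

theorem continuous_bI {μ : ℝ} (hμ : 0 < μ) : Continuous (bI μ) :=
  continuous_iff_continuousAt.2 fun r => (hasDerivAt_bI hμ r).continuousAt

/-- Bessel's equation `r I'' + 2(μ+1) I' + 4π² r I = 0`, solved for `I''`. It comes from one
integration by parts against `(1 - s²)^(μ+1)`. -/
theorem hasDerivAt_bI' {μ : ℝ} (hμ : 0 < μ) {r : ℝ} (hr : 0 < r) :
    HasDerivAt (bI' μ) (-(4 * π ^ 2) * bI μ r - 2 * (μ + 1) / r * bI' μ r) r := by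
  have hc := continuous_weight hμ
  have h := hasDerivAt_sinIntegral (g := fun s => -(2 * π * s) * (1 - s ^ 2) ^ μ)
    (by fun_prop) r
  refine HasDerivAt.congr_deriv (h) ?_
  have hparts : ∫ s in (-1 : ℝ)..1, (1 - s ^ 2) ^ (μ + 1) * (Real.cos (2 * π * r * s) * (2 * π * r))
      = - ∫ s in (-1 : ℝ)..1, ((μ + 1) * (1 - s ^ 2) ^ μ * (-(2 * s))) *
          Real.sin (2 * π * r * s) := by
    rw [intervalIntegral.integral_mul_deriv_eq_deriv_mul
      (u' := fun s => (μ + 1) * (1 - s ^ 2) ^ μ * (-(2 * s)))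
      (v := fun s => Real.sin (2 * π * r * s))]
    · have : (0 : ℝ) ^ (μ + 1) = 0 := Real.zero_rpow (by linarith)
      norm_num [this]
    · intro s _
      have h1 : HasDerivAt (fun s : ℝ => 1 - s ^ 2) (-(2 * s)) s := by
        simpa using (hasDerivAt_pow 2 s).const_sub 1
      refine HasDerivAt.congr_deriv (h1.rpow_const (p := μ + 1) (Or.inr (by linarith))) ?_
      rw [add_sub_cancel_right]; ring
    · intro s _
      have h : HasDerivAt (fun s : ℝ => 2 * π * r * s) (2 * π * r) s := by
        simpa using (hasDerivAt_id s).const_mul (2 * π * r)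
      exact h.sin
    · apply Continuous.intervalIntegrable; fun_prop
    · apply Continuous.intervalIntegrable; fun_prop
  have e1 : ∫ s in (-1 : ℝ)..1, (-(2 * π * s) * (1 - s ^ 2) ^ μ) *
        ((2 * π * s) * Real.cos (2 * π * r * s))
      = ∫ s in (-1 : ℝ)..1, ((2 * π / r) * ((1 - s ^ 2) ^ (μ + 1) *
          (Real.cos (2 * π * r * s) * (2 * π * r))) -
          (4 * π ^ 2) * ((1 - s ^ 2) ^ μ * Real.cos (2 * π * r * s))) := by
    refine intervalIntegral.integral_congr fun s hs => ?_
    rw [uIcc_of_le (by norm_num)] at hs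
    have h0 : (0 : ℝ) ≤ 1 - s ^ 2 := by nlinarith [hs.1, hs.2]
    have : (1 - s ^ 2) ^ (μ + 1) = (1 - s ^ 2) ^ μ * (1 - s ^ 2) :=
      Real.rpow_add_one' h0 (by linarith)
    simp only [this]
    field_simp
    ring
  rw [e1, intervalIntegral.integral_sub, intervalIntegral.integral_const_mul,
    intervalIntegral.integral_const_mul, hparts]
  · have : ∫ s in (-1 : ℝ)..1, ((μ + 1) * (1 - s ^ 2) ^ μ * (-(2 * s))) * Real.sin (2 * π * r * s)
        = (μ + 1) / π * bI' μ r := by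
      unfold bI'
      rw [← intervalIntegral.integral_const_mul]
      congr 1; ext s; field_simp
    rw [this]
    unfold bI
    field_simp
    ring
  · apply Continuous.intervalIntegrable
    have := continuous_weight (μ := μ + 1) (by linarith)
    fun_prop
  · apply Continuous.intervalIntegrable; fun_prop

/-- `r^(μ+1) · bI μ r`: the normalisation that removes the first-order term from Bessel's
equation. -/
def bU (μ r : ℝ) : ℝ := r ^ (μ + 1) * bI μ r

/-- The derivative of `bU μ` on `(0, ∞)`. -/
def bU' (μ r : ℝ) : ℝ := r ^ (μ + 1) * (bI' μ r + (μ + 1) / r * bI μ r)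

theorem hasDerivAt_bU {μ : ℝ} (hμ : 0 < μ) {r : ℝ} (hr : 0 < r) :
    HasDerivAt (bU μ) (bU' μ r) r := by
  refine HasDerivAt.congr_deriv ((Real.hasDerivAt_rpow_const (p := μ + 1) (Or.inl hr.ne')).mul (hasDerivAt_bI hμ r)) ?_
  rw [Real.rpow_sub_one hr.ne', bU']
  field_simp
  ring

theorem hasDerivAt_bU' {μ : ℝ} (hμ : 0 < μ) {r : ℝ} (hr : 0 < r) :
    HasDerivAt (bU' μ) (-(4 * π ^ 2) * bU μ r + μ * (μ + 1) / r ^ 2 * bU μ r) r := by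
  have h1 : HasDerivAt (fun r : ℝ => (μ + 1) / r) (-(μ + 1) / r ^ 2) r := by
    refine HasDerivAt.congr_deriv ((hasDerivAt_inv hr.ne').const_mul (μ + 1)) ?_
    field_simp
  refine HasDerivAt.congr_deriv ((Real.hasDerivAt_rpow_const (p := μ + 1) (Or.inl hr.ne')).mul
    ((hasDerivAt_bI' hμ hr).add (h1.mul (hasDerivAt_bI hμ r)))) ?_
  rw [Real.rpow_sub_one hr.ne', bU]
  field_simp
  ring

/-- The energy `u'² + 4π²u²` of `u = bU μ`. -/
def bE (μ r : ℝ) : ℝ := bU' μ r ^ 2 + 4 * π ^ 2 * bU μ r ^ 2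

theorem bE_nonneg (μ r : ℝ) : 0 ≤ bE μ r := by unfold bE; positivity

theorem hasDerivAt_bE {μ : ℝ} (hμ : 0 < μ) {r : ℝ} (hr : 0 < r) :
    HasDerivAt (bE μ) (μ * (μ + 1) / r ^ 2 * (2 * bU μ r * bU' μ r)) r := by
  refine HasDerivAt.congr_deriv (((hasDerivAt_bU' hμ hr).pow 2).add (((hasDerivAt_bU hμ hr).pow 2).const_mul (4 * π ^ 2))) ?_
  push_cast
  ring

theorem abs_two_mul_le_bE (μ r : ℝ) : |2 * bU μ r * bU' μ r| ≤ bE μ r := by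
  have hpi : (1 : ℝ) ≤ 4 * π ^ 2 := by nlinarith [Real.pi_gt_three]
  have : bU μ r ^ 2 ≤ 4 * π ^ 2 * bU μ r ^ 2 := le_mul_of_one_le_left (sq_nonneg _) hpi
  unfold bE
  rw [abs_le]
  constructor <;> nlinarith [sq_nonneg (bU μ r - bU' μ r), sq_nonneg (bU μ r + bU' μ r)]

theorem bE_upper {μ : ℝ} (hμ : 0 < μ) {r₀ r : ℝ} (h0 : 0 < r₀) (hr : r₀ ≤ r) :
    bE μ r * Real.exp (μ * (μ + 1) / r) ≤ bE μ r₀ * Real.exp (μ * (μ + 1) / r₀) := by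
  have hd : ∀ x, 0 < x → HasDerivAt (fun r => bE μ r * Real.exp (μ * (μ + 1) / r))
      (Real.exp (μ * (μ + 1) / x) * (μ * (μ + 1) / x ^ 2) * (2 * bU μ x * bU' μ x - bE μ x)) x := by
    intro x hx
    have h1 : HasDerivAt (fun r : ℝ => μ * (μ + 1) / r) (-(μ * (μ + 1)) / x ^ 2) x := by
      refine HasDerivAt.congr_deriv ((hasDerivAt_inv hx.ne').const_mul (μ * (μ + 1))) ?_
      field_simp
    refine HasDerivAt.congr_deriv ((hasDerivAt_bE hμ hx).mul h1.exp) ?_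
    ring
  refine antitoneOn_of_deriv_nonpos (convex_Ici r₀)
    (fun x hx => (hd x (h0.trans_le hx)).continuousAt.continuousWithinAt)
    (fun x hx => ?_) (fun x hx => ?_) self_mem_Ici hr hr
  · rw [interior_Ici] at hx
    exact (hd x (h0.trans hx)).differentiableAt.differentiableWithinAt
  · rw [interior_Ici] at hx
    have hx' := h0.trans hx
    rw [(hd x hx').deriv]
    have := abs_le.1 (abs_two_mul_le_bE μ x)
    exact mul_nonpos_of_nonneg_of_nonpos (by positivity) (by linarith)

theorem bE_lower {μ : ℝ} (hμ : 0 < μ) {r₀ r : ℝ} (h0 : 0 < r₀) (hr : r₀ ≤ r) :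
    bE μ r₀ * Real.exp (-(μ * (μ + 1) / r₀)) ≤ bE μ r * Real.exp (-(μ * (μ + 1) / r)) := by
  have hd : ∀ x, 0 < x → HasDerivAt (fun r => bE μ r * Real.exp (-(μ * (μ + 1) / r)))
      (Real.exp (-(μ * (μ + 1) / x)) * (μ * (μ + 1) / x ^ 2) *
        (2 * bU μ x * bU' μ x + bE μ x)) x := by
    intro x hx
    have h1 : HasDerivAt (fun r : ℝ => μ * (μ + 1) / r) (-(μ * (μ + 1)) / x ^ 2) x := by
      refine HasDerivAt.congr_deriv ((hasDerivAt_inv hx.ne').const_mul (μ * (μ + 1))) ?_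
      field_simp
    refine HasDerivAt.congr_deriv ((hasDerivAt_bE hμ hx).mul h1.fun_neg.exp) ?_
    ring
  refine monotoneOn_of_deriv_nonneg (convex_Ici r₀)
    (fun x hx => (hd x (h0.trans_le hx)).continuousAt.continuousWithinAt)
    (fun x hx => ?_) (fun x hx => ?_) self_mem_Ici hr hr
  · rw [interior_Ici] at hx
    exact (hd x (h0.trans hx)).differentiableAt.differentiableWithinAt
  · rw [interior_Ici] at hx
    have hx' := h0.trans hx
    rw [(hd x hx').deriv]
    have := abs_le.1 (abs_two_mul_le_bE μ x)
    exact mul_nonneg (by positivity) (by linarith)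

theorem bI_pos {μ : ℝ} {r : ℝ} (hμ : 0 < μ) (h0 : 0 ≤ r) (hr : r < 1 / 4) : 0 < bI μ r := by
  have hc := continuous_weight hμ
  refine intervalIntegral.intervalIntegral_pos_of_pos_on
    (Continuous.intervalIntegrable (by fun_prop) _ _) (fun s hs => ?_) (by norm_num)
  refine mul_pos (Real.rpow_pos_of_pos (by nlinarith [hs.1, hs.2]) _) ?_
  have hpi := Real.pi_pos
  apply Real.cos_pos_of_mem_Ioo
  have : |r * s| < 1 / 4 := by
    rw [abs_mul, abs_of_nonneg h0]
    have : |s| ≤ 1 := abs_le.2 ⟨hs.1.le, hs.2.le⟩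
    nlinarith
  rw [abs_lt] at this
  constructor <;> nlinarith [this.1, this.2]

theorem bE_pos {μ : ℝ} (hμ : 0 < μ) {r : ℝ} (hr : 0 < r) : 0 < bE μ r := by
  have h0 : 0 < min r (1 / 8) := by positivity
  have hp : 0 < bE μ (min r (1 / 8)) := by
    have : 0 < bI μ (min r (1 / 8)) := bI_pos hμ h0.le
      ((min_le_right _ _).trans_lt (by norm_num))
    have : 0 < bU μ (min r (1 / 8)) := mul_pos (Real.rpow_pos_of_pos h0 _) this
    unfold bE; positivity
  have h := bE_lower hμ h0 (min_le_left r (1 / 8))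
  by_contra hcon
  have h1 : bE μ r * Real.exp (-(μ * (μ + 1) / r)) ≤ 0 :=
    mul_nonpos_of_nonpos_of_nonneg (not_lt.1 hcon) (Real.exp_pos _).le
  have h2 := mul_pos hp (Real.exp_pos (-(μ * (μ + 1) / min r (1 / 8))))
  linarith

/-- Beyond `r = 1` the energy is comparable to a constant. -/
theorem exists_bE_bounds {μ : ℝ} (hμ : 0 < μ) :
    ∃ c C : ℝ, 0 < c ∧ 0 < C ∧ ∀ r, 1 ≤ r → c ^ 2 ≤ bE μ r ∧ bE μ r ≤ C ^ 2 := by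
  have h1 := bE_pos hμ one_pos
  set k := μ * (μ + 1) with hk
  have hk0 : 0 < k := by positivity
  refine ⟨√(bE μ 1 * Real.exp (-k)), √(bE μ 1 * Real.exp k), by positivity, by positivity,
    fun r hr => ?_⟩
  have hr0 : 0 < r := by linarith
  rw [Real.sq_sqrt (by positivity), Real.sq_sqrt (by positivity)]
  have hl := bE_lower hμ one_pos hr
  have hu := bE_upper hμ one_pos hr
  rw [div_one] at hl hu
  have hE := bE_nonneg μ r
  constructor
  · refine hl.trans (mul_le_of_le_one_right hE (Real.exp_le_one_iff.2 ?_))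
    have : 0 ≤ k / r := by positivity
    linarith
  · refine le_trans (le_mul_of_one_le_right hE (Real.one_le_exp ?_)) hu
    positivity

theorem abs_bU_le {μ r C : ℝ} (hC : 0 < C) (h : bE μ r ≤ C ^ 2) : |bU μ r| ≤ C := by
  have hpi : (1 : ℝ) ≤ 4 * π ^ 2 := by nlinarith [Real.pi_gt_three]
  have : bU μ r ^ 2 ≤ 4 * π ^ 2 * bU μ r ^ 2 := le_mul_of_one_le_left (sq_nonneg _) hpi
  apply abs_le_of_sq_le_sq _ hC.le
  unfold bE at h
  nlinarith [sq_nonneg (bU' μ r)]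

theorem abs_bU'_le {μ r C : ℝ} (hC : 0 < C) (h : bE μ r ≤ C ^ 2) : |bU' μ r| ≤ C := by
  apply abs_le_of_sq_le_sq _ hC.le
  unfold bE at h
  have : 0 ≤ 4 * π ^ 2 * bU μ r ^ 2 := by positivity
  linarith

theorem exists_bI_le {μ : ℝ} (hμ : 0 < μ) :
    ∃ C : ℝ, 0 < C ∧ ∀ r, 0 ≤ r → |bI μ r| ≤ C * (1 + r) ^ (-(μ + 1)) := by
  obtain ⟨c, C, hc, hC, hb⟩ := exists_bE_bounds hμ
  obtain ⟨D, hD⟩ := isCompact_Icc.exists_bound_of_continuousOn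
    (s := Icc (0 : ℝ) 1) (continuous_bI hμ).continuousOn
  refine ⟨max C (max D 1) * 2 ^ (μ + 1), by positivity, fun r hr => ?_⟩
  rw [mul_assoc, Real.rpow_neg (by linarith), ← Real.inv_rpow (by linarith),
    ← Real.mul_rpow (by norm_num) (by positivity)]
  rcases le_total r 1 with h | h
  · have h1 : (1 : ℝ) ≤ (2 * (1 + r)⁻¹) ^ (μ + 1) := by
      apply Real.one_le_rpow _ (by linarith)
      rw [← div_eq_mul_inv, le_div_iff₀ (by linarith)]; linarith
    have h2 := hD r ⟨hr, h⟩
    rw [Real.norm_eq_abs] at h2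
    have h3 : D ≤ max C (max D 1) := (le_max_left _ _).trans (le_max_right _ _)
    have h4 : 0 ≤ max C (max D 1) := by positivity
    nlinarith
  · have hr0 : 0 < r := by linarith
    have h2 := abs_bU_le hC (hb r h).2
    have hrp : 0 < r ^ (μ + 1) := Real.rpow_pos_of_pos hr0 _
    rw [bU, abs_mul, abs_of_pos hrp] at h2
    have h3 : (r⁻¹) ^ (μ + 1) ≤ (2 * (1 + r)⁻¹) ^ (μ + 1) := by
      apply Real.rpow_le_rpow (by positivity) _ (by linarith)
      rw [← div_eq_mul_inv, le_div_iff₀ (by linarith), inv_mul_le_iff₀ hr0]; linarith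
    rw [Real.inv_rpow hr0.le] at h3
    calc |bI μ r| ≤ C * (r ^ (μ + 1))⁻¹ := by
          rw [← div_eq_mul_inv, le_div_iff₀ hrp]; linarith
      _ ≤ max C (max D 1) * (2 * (1 + r)⁻¹) ^ (μ + 1) := by
          gcongr
          exact le_max_left _ _

theorem countable_zeros_bI {μ : ℝ} (hμ : 0 < μ) : {r : ℝ | 0 < r ∧ bI μ r = 0}.Countable := by
  have hd : DiscreteTopology {r : ℝ | 0 < r ∧ bI μ r = 0} := by
    rw [discreteTopology_subtype_iff]
    rintro x ⟨hx, hx0⟩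
    have hu : bU μ x = 0 := by simp [bU, hx0]
    have hne : bU' μ x ≠ 0 := by
      intro h
      have := bE_pos hμ hx
      simp [bE, h, hu] at this
    have h := (hasDerivAt_bU hμ hx).eventually_ne (c := 0) hne
    rw [← disjoint_iff, Filter.disjoint_principal_right]
    filter_upwards [h] with z hz hz'
    exact hz (by simp [bU, hz'.2])
  exact countable_of_Lindelof_of_discrete (X := {r : ℝ | 0 < r ∧ bI μ r = 0})

/-- The Lipschitz bound for `bU μ` on `[1, ∞)`. -/
theorem bU_lipschitz {μ C : ℝ} (hμ : 0 < μ) (hC : 0 < C) (h : ∀ r, 1 ≤ r → bE μ r ≤ C ^ 2)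
    {r s : ℝ} (hr : 1 ≤ r) (hs : 1 ≤ s) : |bU μ r - bU μ s| ≤ C * |r - s| :=
  (convex_Ici (1 : ℝ)).norm_image_sub_le_of_norm_hasDerivWithin_le
    (fun x hx => (hasDerivAt_bU hμ (one_pos.trans_le hx)).hasDerivWithinAt)
    (fun x hx => abs_bU'_le hC (h x hx)) hs hr

/-- Two values of `u = bU μ` at distance `τ` cannot both be small: by a Wronskian comparison with
`sin (2π ·)` they control the energy, up to an error vanishing at infinity. -/
theorem exists_two_point {μ : ℝ} (hμ : 0 < μ) {τ : ℝ} (hτ : 0 < τ) (hτ' : τ ≤ 1 / 4) :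
    ∃ c r₀ : ℝ, 0 < c ∧ 1 ≤ r₀ ∧ ∀ r, r₀ ≤ r → c ≤ |bU μ r| + |bU μ (r - τ)| := by
  obtain ⟨c, C, hc, hC, hb⟩ := exists_bE_bounds hμ
  have hpi := Real.pi_pos
  set S := Real.sin (2 * π * τ) with hS
  have hS0 : 0 < S := Real.sin_pos_of_pos_of_lt_pi (by positivity) (by nlinarith)
  have hS1 : S ≤ 1 := Real.sin_le_one _
  set k := μ * (μ + 1) with hk
  have hk0 : 0 < k := by positivity
  -- the error term `k C τ / (r - τ)²` is at most `c S / 4` once `r ≥ r₀`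
  refine ⟨c * S / (16 * π), max 2 (1 + 4 * k * C / (c * S)), by positivity,
    by linarith [le_max_left 2 (1 + 4 * k * C / (c * S))], fun r hr => ?_⟩
  have hr2 : 2 ≤ r := (le_max_left _ _).trans hr
  have hr3 : 1 + 4 * k * C / (c * S) ≤ r := (le_max_right _ _).trans hr
  set a := r - τ with ha
  have ha1 : 1 ≤ a := by linarith
  have hv : ∀ x, HasDerivAt (fun x => Real.sin (2 * π * (x - a)))
      (Real.cos (2 * π * (x - a)) * (2 * π)) x := fun x => by
    have : HasDerivAt (fun x : ℝ => 2 * π * (x - a)) (2 * π) x := by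
      simpa using ((hasDerivAt_id x).sub_const a).const_mul (2 * π)
    exact this.sin
  have hv' : ∀ x, HasDerivAt (fun x => Real.cos (2 * π * (x - a)))
      (-Real.sin (2 * π * (x - a)) * (2 * π)) x := fun x => by
    have : HasDerivAt (fun x : ℝ => 2 * π * (x - a)) (2 * π) x := by
      simpa using ((hasDerivAt_id x).sub_const a).const_mul (2 * π)
    exact this.cos
  have hW : ∀ x, 1 ≤ x → HasDerivAt (fun x => bU' μ x * Real.sin (2 * π * (x - a)) -
      2 * π * (bU μ x * Real.cos (2 * π * (x - a))))
      (k / x ^ 2 * bU μ x * Real.sin (2 * π * (x - a))) x := fun x hx => by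
    refine HasDerivAt.congr_deriv (((hasDerivAt_bU' hμ (by linarith)).mul (hv x)).sub
      (((hasDerivAt_bU hμ (by linarith)).mul (hv' x)).const_mul (2 * π))) ?_
    ring
  have hmv := (convex_Icc a r).norm_image_sub_le_of_norm_hasDerivWithin_le
    (C := k / (r - 1) * C)
    (fun x hx => (hW x (ha1.trans hx.1)).hasDerivWithinAt)
    (fun x hx => ?_) (left_mem_Icc.2 (by linarith)) (right_mem_Icc.2 (by linarith : a ≤ r))
  swap
  · have hx1 := ha1.trans hx.1
    have h1 := abs_bU_le hC (hb x hx1).2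
    have h2 := Real.abs_sin_le_one (2 * π * (x - a))
    rw [norm_mul, norm_mul, Real.norm_eq_abs, Real.norm_eq_abs, Real.norm_eq_abs,
      abs_of_nonneg (by positivity : 0 ≤ k / x ^ 2)]
    have h3 : k / x ^ 2 ≤ k / (r - 1) := by
      apply div_le_div_of_nonneg_left hk0.le (by linarith)
      nlinarith [hx.1]
    have h4 : 0 ≤ k / (r - 1) := div_nonneg hk0.le (by linarith)
    calc k / x ^ 2 * |bU μ x| * |Real.sin (2 * π * (x - a))|
        ≤ k / (r - 1) * C * 1 := by gcongr
      _ = _ := mul_one _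
  have era : r - a = τ := by rw [ha]; ring
  simp only [sub_self, mul_zero, Real.sin_zero, Real.cos_zero, era, Real.norm_eq_abs,
    abs_of_pos hτ, mul_one, zero_sub, sub_neg_eq_add] at hmv
  rw [← hS] at hmv
  have hr1 : 0 < r - 1 := by linarith
  have herr : k / (r - 1) * C * τ ≤ c * S / 4 := by
    have : 4 * k * C / (c * S) ≤ r - 1 := by linarith
    rw [div_le_iff₀ (by positivity)] at this
    have h5 : k / (r - 1) * C ≤ c * S / 4 := by
      rw [div_mul_eq_mul_div, div_le_iff₀ hr1]; nlinarith
    have h6 : 0 ≤ k / (r - 1) * C := by positivity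
    nlinarith
  have hcos := Real.abs_cos_le_one (2 * π * τ)
  by_contra! hcon
  have hu1 : |bU μ r| < c * S / (16 * π) := lt_of_le_of_lt (by linarith [abs_nonneg (bU μ a)]) hcon
  -- at `r` the derivative carries the energy
  have hu' : c / 2 ≤ |bU' μ r| := by
    by_contra! hlt
    have h1 := (hb r (by linarith)).1
    unfold bE at h1
    have h2 : bU' μ r ^ 2 ≤ (c / 2) ^ 2 := sq_le_sq.2 (by rw [abs_of_pos (half_pos hc)]; exact hlt.le)
    have h3 : 2 * π * |bU μ r| ≤ c / 8 := by
      have : 2 * π * (c * S / (16 * π)) = c * S / 8 := by field_simp; ring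
      nlinarith
    have h4 : 4 * π ^ 2 * bU μ r ^ 2 = (2 * π * |bU μ r|) ^ 2 := by rw [mul_pow, sq_abs]; ring
    have h5 : (2 * π * |bU μ r|) ^ 2 ≤ (c / 8) ^ 2 := pow_le_pow_left₀ (by positivity) h3 2
    nlinarith
  have htri : |bU' μ r * S| ≤ |bU' μ r * S - 2 * π * (bU μ r * Real.cos (2 * π * τ)) + 2 * π * bU μ a|
      + 2 * π * (|bU μ r| + |bU μ a|) := by
    have e : bU' μ r * S = (bU' μ r * S - 2 * π * (bU μ r * Real.cos (2 * π * τ)) + 2 * π * bU μ a)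
      + (2 * π * (bU μ r * Real.cos (2 * π * τ)) + -(2 * π * bU μ a)) := by ring
    have h1 : |2 * π * (bU μ r * Real.cos (2 * π * τ)) + -(2 * π * bU μ a)|
        ≤ 2 * π * (|bU μ r| + |bU μ a|) := by
      refine (abs_add_le _ _).trans ?_
      rw [abs_neg, abs_mul (2 * π), abs_mul (2 * π) (bU μ a),
        abs_of_pos (by positivity : 0 < 2 * π), mul_add, abs_mul]
      have := mul_le_of_le_one_right (abs_nonneg (bU μ r)) hcos
      gcongr
    calc |bU' μ r * S| = _ := congrArg abs e
      _ ≤ _ := (abs_add_le _ _).trans (by gcongr)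
  rw [abs_mul, abs_of_pos hS0] at htri
  have h8 : 2 * π * (|bU μ r| + |bU μ a|) < c * S / 8 := by
    have : 2 * π * (c * S / (16 * π)) = c * S / 8 := by field_simp; ring
    rw [← this]; gcongr
  nlinarith [mul_pos hc hS0]

/-! ### The Bochner-Riesz kernel as a one-dimensional integral -/

theorem exists_isometry_single {m : ℕ} (x : Euc (m + 1)) :
    ∃ A : Euc (m + 1) ≃ₗᵢ[ℝ] Euc (m + 1), A (EuclideanSpace.single 0 ‖x‖) = x :=
  ⟨_, Submodule.reflection_sub (by simp)⟩

/-- The Fourier integral defining the kernel, with the frequency variable split into its component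
along `x` and the orthogonal ones. -/
theorem brKernel_eq_integral_prod {m : ℕ} (δ : ℝ) (x : Euc (m + 1)) :
    brKernel (m + 1) δ x = ∫ z : ℝ × (Fin m → ℝ),
      cexp (↑(2 * π * (z.1 * ‖x‖)) * I) *
        (((1 - z.1 ^ 2 - ∑ i, z.2 i ^ 2) ⊔ 0) ^ δ : ℝ) := by
  obtain ⟨A, hA⟩ := exists_isometry_single x
  have h1 : brKernel (m + 1) δ x = brKernel (m + 1) δ (EuclideanSpace.single 0 ‖x‖) := by
    unfold brKernel
    have := Real.fourierInv_comp_linearIsometry A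
      (fun ξ : Euc (m + 1) => (Complex.ofReal (((1 - ‖ξ‖ ^ 2) ⊔ 0) ^ δ)))
      (EuclideanSpace.single 0 ‖x‖)
    rw [hA] at this
    rw [← this]
    have hcomp : (fun ξ : Euc (m + 1) => (Complex.ofReal (((1 - ‖ξ‖ ^ 2) ⊔ 0) ^ δ))) ∘ A =
        fun ξ : Euc (m + 1) => (Complex.ofReal (((1 - ‖ξ‖ ^ 2) ⊔ 0) ^ δ)) := by
      funext ξ
      simp only [Function.comp_apply, LinearIsometryEquiv.norm_map]
    rw [hcomp]
  rw [h1, brKernel, Real.fourierInv_eq']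
  have hmp := ((volume_preserving_piFinSuccAbove (fun _ : Fin (m + 1) => ℝ) 0).comp
    (PiLp.volume_preserving_ofLp (Fin (m + 1))))
  rw [← hmp.integral_comp]
  · congr 1
    ext ξ
    simp [EuclideanSpace.norm_sq_eq, Fin.sum_univ_succ, EuclideanSpace.inner_single_right,
      MeasurableEquiv.piFinSuccAbove_apply, Fin.insertNthEquiv, sub_sub, mul_comm,
      Fin.tail]
  · exact (MeasurableEquiv.piFinSuccAbove (fun _ : Fin (m + 1) => ℝ) 0).measurableEmbedding.comp
      (MeasurableEquiv.toLp 2 (Fin (m + 1) → ℝ)).symm.measurableEmbedding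

/-- The mass of a slice of the weight through the centre of the ball. -/
def sliceConst (m : ℕ) (δ : ℝ) : ℝ := ∫ η : Fin m → ℝ, ((1 - ∑ i, η i ^ 2) ⊔ 0) ^ δ

theorem hasCompactSupport_slice {m : ℕ} {δ : ℝ} (hδ : 0 < δ) :
    HasCompactSupport fun η : Fin m → ℝ => ((1 - ∑ i, η i ^ 2) ⊔ 0) ^ δ := by
  refine HasCompactSupport.intro (isCompact_closedBall (0 : Fin m → ℝ) 1) fun η hη => ?_
  rw [mem_closedBall_zero_iff, pi_norm_le_iff_of_nonneg zero_le_one] at hη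
  push Not at hη
  obtain ⟨i, hi⟩ := hη
  have h1 : η i ^ 2 ≤ ∑ i, η i ^ 2 :=
    Finset.single_le_sum (f := fun i => η i ^ 2) (fun _ _ => sq_nonneg _) (Finset.mem_univ i)
  rw [Real.norm_eq_abs] at hi
  have h2 : 1 < η i ^ 2 := by rw [← sq_abs]; nlinarith
  rw [max_eq_right (by linarith), Real.zero_rpow hδ.ne']

theorem sliceConst_pos {m : ℕ} {δ : ℝ} (hδ : 0 < δ) : 0 < sliceConst m δ := by
  refine Continuous.integral_pos_of_hasCompactSupport_nonneg_nonzero (x := 0) ?_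
    (hasCompactSupport_slice hδ) (fun η => by positivity) (by simp)
  exact Continuous.rpow_const (by fun_prop) fun _ => Or.inr hδ.le

theorem integral_slice {m : ℕ} {δ : ℝ} (s : ℝ) (hs : s ∈ Ioo (-1 : ℝ) 1) :
    ∫ η : Fin m → ℝ, ((1 - s ^ 2 - ∑ i, η i ^ 2) ⊔ 0) ^ δ =
      sliceConst m δ * (1 - s ^ 2) ^ (δ + m / 2) := by
  have h0 : 0 < 1 - s ^ 2 := by nlinarith [hs.1, hs.2]
  set t := √(1 - s ^ 2) with ht
  have ht0 : 0 < t := Real.sqrt_pos.2 h0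
  have ht2 : t ^ 2 = 1 - s ^ 2 := Real.sq_sqrt h0.le
  have h := Measure.integral_comp_smul (volume : Measure (Fin m → ℝ))
    (fun η => ((1 - s ^ 2 - ∑ i, η i ^ 2) ⊔ 0) ^ δ) t
  have e : ∀ η : Fin m → ℝ, ((1 - s ^ 2 - ∑ i, (t • η) i ^ 2) ⊔ 0) ^ δ =
      (1 - s ^ 2) ^ δ * ((1 - ∑ i, η i ^ 2) ⊔ 0) ^ δ := fun η => by
    rw [← Real.mul_rpow h0.le (le_max_right _ _), mul_max_of_nonneg _ _ h0.le, mul_zero]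
    simp only [Pi.smul_apply, smul_eq_mul, mul_pow, ht2, ← Finset.mul_sum]
    ring_nf
  simp only [e] at h
  rw [integral_const_mul, Module.finrank_fin_fun, abs_of_pos (by positivity), smul_eq_mul,
    inv_mul_eq_div, eq_div_iff (by positivity)] at h
  rw [← h, sliceConst, Real.rpow_add h0]
  have : (1 - s ^ 2) ^ ((m : ℝ) / 2) = t ^ m := by
    rw [← ht2, ← Real.rpow_natCast t 2, ← Real.rpow_mul ht0.le]
    push_cast
    rw [mul_div_cancel₀ _ two_ne_zero, Real.rpow_natCast]
  rw [this]; ring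

theorem integral_slice_zero {m : ℕ} {δ : ℝ} (hδ : 0 < δ) (s : ℝ) (hs : s ∉ Ioo (-1 : ℝ) 1) :
    ∫ η : Fin m → ℝ, ((1 - s ^ 2 - ∑ i, η i ^ 2) ⊔ 0) ^ δ = 0 := by
  have h0 : 1 - s ^ 2 ≤ 0 := by
    by_contra! h
    exact hs (abs_lt.1 (by rw [← sq_lt_one_iff_abs_lt_one]; linarith))
  have (η : Fin m → ℝ) : ((1 - s ^ 2 - ∑ i, η i ^ 2) ⊔ 0) ^ δ = 0 := by
    have : 0 ≤ ∑ i, η i ^ 2 := Finset.sum_nonneg fun _ _ => sq_nonneg _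
    rw [max_eq_right (by linarith), Real.zero_rpow hδ.ne']
  simp [this]

theorem integrable_prod_weight {m : ℕ} {δ : ℝ} (hδ : 0 < δ) (r : ℝ) :
    Integrable fun z : ℝ × (Fin m → ℝ) => cexp (↑(2 * π * (z.1 * r)) * I) *
        (((1 - z.1 ^ 2 - ∑ i, z.2 i ^ 2) ⊔ 0) ^ δ : ℝ) := by
  apply Continuous.integrable_of_hasCompactSupport
  · have : Continuous fun z : ℝ × (Fin m → ℝ) => ((1 - z.1 ^ 2 - ∑ i, z.2 i ^ 2) ⊔ 0) ^ δ :=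
      Continuous.rpow_const (by fun_prop) fun _ => Or.inr hδ.le
    fun_prop
  · refine HasCompactSupport.intro
      ((isCompact_closedBall (0 : ℝ) 1).prod (isCompact_closedBall (0 : Fin m → ℝ) 1))
      fun z hz => ?_
    have hpos : 0 ≤ ∑ i, z.2 i ^ 2 := Finset.sum_nonneg fun _ _ => sq_nonneg _
    have : 1 - z.1 ^ 2 - ∑ i, z.2 i ^ 2 ≤ 0 := by
      by_contra! hcon
      refine hz ⟨?_, ?_⟩
      · rw [mem_closedBall_zero_iff, Real.norm_eq_abs, ← sq_le_one_iff_abs_le_one]; linarith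
      · rw [mem_closedBall_zero_iff, pi_norm_le_iff_of_nonneg zero_le_one]
        intro i
        have h1 : z.2 i ^ 2 ≤ ∑ i, z.2 i ^ 2 :=
          Finset.single_le_sum (f := fun i => z.2 i ^ 2) (fun _ _ => sq_nonneg _)
            (Finset.mem_univ i)
        rw [Real.norm_eq_abs, ← sq_le_one_iff_abs_le_one]
        nlinarith [sq_nonneg z.1]
    rw [max_eq_right this, Real.zero_rpow hδ.ne']
    simp

/-- The Bochner-Riesz kernel is a constant multiple of a one-dimensional Poisson integral. -/
theorem brKernel_eq_bI {m : ℕ} {δ : ℝ} (hδ : 0 < δ) (x : Euc (m + 1)) :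
    brKernel (m + 1) δ x = ((sliceConst m δ * bI (δ + m / 2) ‖x‖ : ℝ) : ℂ) := by
  set μ := δ + (m : ℝ) / 2 with hμ
  have hμ0 : 0 < μ := by positivity
  have hc := continuous_weight hμ0
  rw [brKernel_eq_integral_prod, Measure.volume_eq_prod, integral_prod _
    (integrable_prod_weight hδ _)]
  have e1 : ∀ s : ℝ, ∫ η : Fin m → ℝ, cexp (↑(2 * π * (s * ‖x‖)) * I) *
        (((1 - s ^ 2 - ∑ i, η i ^ 2) ⊔ 0) ^ δ : ℝ) =
      (Ioo (-1 : ℝ) 1).indicator (fun s => (sliceConst m δ : ℂ) *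
        (cexp (↑(2 * π * (s * ‖x‖)) * I) * ((1 - s ^ 2) ^ μ : ℝ))) s := fun s => by
    rw [integral_const_mul, integral_complex_ofReal]
    by_cases hs : s ∈ Ioo (-1 : ℝ) 1
    · rw [integral_slice s hs, indicator_of_mem hs]; push_cast; ring
    · rw [integral_slice_zero hδ s hs, indicator_of_notMem hs]; simp
  simp only [e1]
  rw [integral_indicator measurableSet_Ioo, integral_const_mul, ← integral_Ioc_eq_integral_Ioo,
    ← intervalIntegral.integral_of_le (by norm_num)]
  have e2 : ∀ s : ℝ, cexp (↑(2 * π * (s * ‖x‖)) * I) * ((1 - s ^ 2) ^ μ : ℝ) =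
      (((1 - s ^ 2) ^ μ * Real.cos (2 * π * ‖x‖ * s) : ℝ) : ℂ) +
        (((1 - s ^ 2) ^ μ * Real.sin (2 * π * ‖x‖ * s) : ℝ) : ℂ) * I := fun s => by
    rw [Complex.exp_mul_I, ← Complex.ofReal_cos, ← Complex.ofReal_sin,
      show 2 * π * (s * ‖x‖) = 2 * π * ‖x‖ * s by ring]
    push_cast; ring
  -- the sine part is odd
  have e3 : ∫ s in (-1 : ℝ)..1, (1 - s ^ 2) ^ μ * Real.sin (2 * π * ‖x‖ * s) = 0 := by
    have := intervalIntegral.integral_comp_neg (a := -1) (b := 1)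
      (fun s : ℝ => (1 - s ^ 2) ^ μ * Real.sin (2 * π * ‖x‖ * s))
    simp only [even_two, Even.neg_pow, mul_neg, Real.sin_neg, neg_neg,
      intervalIntegral.integral_neg] at this
    linarith
  simp only [e2]
  rw [intervalIntegral.integral_add, intervalIntegral.integral_mul_const,
    intervalIntegral.integral_ofReal, intervalIntegral.integral_ofReal, e3]
  · simp [bI]
  · apply Continuous.intervalIntegrable; fun_prop
  · apply Continuous.intervalIntegrable; fun_prop

theorem continuous_brKernel {m : ℕ} {δ : ℝ} (hδ : 0 < δ) : Continuous (brKernel (m + 1) δ) := by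
  have := continuous_bI (μ := δ + m / 2) (by positivity)
  rw [show brKernel (m + 1) δ = _ from funext (brKernel_eq_bI hδ)]
  fun_prop

theorem exists_brKernel_le {m : ℕ} {δ : ℝ} (hδ : 0 < δ) :
    ∃ C : ℝ, 0 < C ∧ ∀ x : Euc (m + 1),
      ‖brKernel (m + 1) δ x‖ ≤ C * (1 + ‖x‖) ^ (-(δ + m / 2 + 1)) := by
  obtain ⟨C, hC, h⟩ := exists_bI_le (μ := δ + m / 2) (by positivity)
  have hs := sliceConst_pos (m := m) hδ
  refine ⟨sliceConst m δ * C, by positivity, fun x => ?_⟩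
  rw [brKernel_eq_bI hδ, Complex.norm_real, norm_mul, Real.norm_eq_abs, Real.norm_eq_abs,
    abs_of_pos hs, mul_assoc]
  gcongr
  exact h _ (norm_nonneg x)

theorem brKernel_ne_zero_ae {m : ℕ} {δ : ℝ} (hδ : 0 < δ) :
    ∀ᵐ x : Euc (m + 1), brKernel (m + 1) δ x ≠ 0 := by
  have hs := sliceConst_pos (m := m) hδ
  have hsub : {x : Euc (m + 1) | ¬ brKernel (m + 1) δ x ≠ 0} ⊆
      {0} ∪ ⋃ r ∈ {r : ℝ | 0 < r ∧ bI (δ + m / 2) r = 0}, Metric.sphere 0 r := by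
    intro x hx
    rcases eq_or_ne x 0 with h | h
    · exact Or.inl h
    · refine Or.inr (mem_biUnion (x := ‖x‖) ⟨norm_pos_iff.2 h, ?_⟩ (by simp))
      simp only [brKernel_eq_bI hδ, Set.mem_ofPred_eq, ne_eq, not_not, Complex.ofReal_eq_zero,
        mul_eq_zero, hs.ne', false_or] at hx
      exact hx
  refine measure_mono_null hsub (measure_union_null (measure_singleton _) ?_)
  rw [measure_biUnion_null_iff (countable_zeros_bI (by positivity))]
  intro r hr
  exact Measure.addHaar_sphere _ _ _

/-! ### Size of the kernel and domain of the operator -/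

theorem exists_measure_inter_translate {n : ℕ} {E : Set (Euc n)} (hE : IsCompact E)
    (h0 : volume E ≠ 0) :
    ∃ ρ : ℝ, 0 < ρ ∧ ∀ h : Euc n, ‖h‖ < ρ →
      volume E ≤ 2 * volume (E ∩ (fun z => z + h) ⁻¹' E) := by
  have hfin : volume E ≠ ⊤ := hE.measure_ne_top
  obtain ⟨U, hEU, hU, hvU⟩ := E.exists_isOpen_lt_add (μ := volume) hfin
    (ε := volume E / 2) (by simp [h0])
  obtain ⟨ρ, hρ, hsub⟩ := hE.exists_thickening_subset_open hU hEU
  refine ⟨ρ, hρ, fun h hh => ?_⟩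
  set F := (fun z => z + h) ⁻¹' E with hF
  have hvF : volume F = volume E := measure_preimage_add_right _ _ _
  have hFU : F ⊆ U := fun z hz => hsub (Metric.mem_thickening_iff.2 ⟨z + h, hz, by simpa using hh⟩)
  have hFm : MeasurableSet F := hE.measurableSet.preimage (by fun_prop)
  have h1 := measure_union_add_inter (μ := volume) E hFm
  have h2 : volume (E ∪ F) ≤ volume E + volume E / 2 :=
    (measure_mono (union_subset hEU hFU)).trans hvU.le
  rw [hvF] at h1
  have h3 : volume (E ∩ F) ≠ ⊤ := ((measure_mono inter_subset_left).trans_lt hfin.lt_top).ne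
  have h4 : volume (E ∪ F) ≠ ⊤ := (measure_union_lt_top hfin.lt_top (by simpa [hvF] using hfin.lt_top)).ne
  have h5 : volume E / 2 ≠ ⊤ := (ENNReal.div_lt_top hfin two_ne_zero).ne
  rw [← ENNReal.toReal_le_toReal hfin (ENNReal.mul_ne_top (by simp) h3), ENNReal.toReal_mul]
  rw [← ENNReal.toReal_le_toReal h4 (by simp [hfin, h5]), ENNReal.toReal_add hfin h5,
    ENNReal.toReal_div] at h2
  have h6 := congrArg ENNReal.toReal h1
  rw [ENNReal.toReal_add h4 h3, ENNReal.toReal_add hfin hfin] at h6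
  simp only [ENNReal.toReal_ofNat] at *
  linarith

theorem norm_sub_smul_normalize {n : ℕ} {y v : Euc n} {τ : ℝ} (hy : y ≠ 0) (hτ : 0 ≤ τ)
    (hv : τ ≤ ‖v‖) (hv0 : v ≠ 0) :
    |‖v - (τ / ‖y‖) • y‖ - (‖v‖ - τ)| ≤ 2 * τ * ‖y - v‖ / ‖y‖ := by
  have hy' : 0 < ‖y‖ := norm_pos_iff.2 hy
  have hv' : 0 < ‖v‖ := norm_pos_iff.2 hv0
  have h1 : ‖v‖ - τ = ‖v - (τ / ‖v‖) • v‖ := by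
    rw [show v - (τ / ‖v‖) • v = ((‖v‖ - τ) / ‖v‖) • v by
      rw [sub_div, div_self hv'.ne', sub_smul, one_smul], norm_smul, Real.norm_eq_abs,
      abs_of_nonneg (by have := sub_nonneg.2 hv; positivity), div_mul_cancel₀ _ hv'.ne']
  rw [h1]
  refine (abs_norm_sub_norm_le _ _).trans ?_
  have h2 : v - (τ / ‖y‖) • y - (v - (τ / ‖v‖) • v) =
      (τ / ‖y‖) • ((v - y) + ((‖y‖ - ‖v‖) / ‖v‖) • v) := by
    rw [smul_add, smul_sub, smul_smul]
    have : τ / ‖y‖ * ((‖y‖ - ‖v‖) / ‖v‖) = τ / ‖v‖ - τ / ‖y‖ := by field_simp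
    rw [this, sub_smul]; abel
  rw [h2, norm_smul, Real.norm_eq_abs, abs_of_nonneg (by positivity)]
  have h3 : ‖((‖y‖ - ‖v‖) / ‖v‖) • v‖ ≤ ‖y - v‖ := by
    rw [norm_smul, norm_div, norm_norm, div_mul_cancel₀ _ hv'.ne']
    exact abs_norm_sub_norm_le _ _
  have h4 := norm_add_le (v - y) (((‖y‖ - ‖v‖) / ‖v‖) • v)
  rw [norm_sub_rev v y] at h4
  calc τ / ‖y‖ * _ ≤ τ / ‖y‖ * (2 * ‖y - v‖) := by gcongr; linarith
    _ = _ := by ring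

/-- At two points whose distances to `y` differ by roughly `τ`, the kernel cannot be small twice. -/
theorem exists_brKernel_two_point {m : ℕ} {δ : ℝ} (hδ : 0 < δ) {τ : ℝ} (hτ : 0 < τ)
    (hτ' : τ ≤ 1 / 4) (B : ℝ) (hB : 0 ≤ B) :
    ∃ c Y : ℝ, 0 < c ∧ 1 ≤ Y ∧ ∀ y z : Euc (m + 1), Y ≤ ‖y‖ → ‖z‖ ≤ B →
      c * (1 + ‖y‖) ^ (-(δ + m / 2 + 1)) ≤
        ‖brKernel (m + 1) δ (z - y)‖ + ‖brKernel (m + 1) δ (z + (τ / ‖y‖) • y - y)‖ := by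
  set μ := δ + (m : ℝ) / 2 with hμ
  have hμ0 : 0 < μ := by positivity
  obtain ⟨c, r₀, hc, hr₀, h2⟩ := exists_two_point hμ0 hτ hτ'
  obtain ⟨c', C, hc', hC, hE⟩ := exists_bE_bounds hμ0
  have hs := sliceConst_pos (m := m) hδ
  have hlip {r s : ℝ} := bU_lipschitz (r := r) (s := s) hμ0 hC (fun r hr => (hE r hr).2)
  refine ⟨sliceConst m δ * (c / 2 * 2 ^ (-(μ + 1))),
    r₀ + B + 2 + 4 * τ * B * C / c, by positivity, ?_, fun y z hy hz => ?_⟩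
  · have : 0 ≤ 4 * τ * B * C / c := by positivity
    linarith
  have h40 : 0 ≤ 4 * τ * B * C / c := by positivity
  have hy0 : 0 < ‖y‖ := by linarith
  set v := y - z with hv
  have hvy : ‖y‖ - B ≤ ‖v‖ := by
    have := norm_sub_norm_le y z
    linarith
  have hvy' : ‖v‖ ≤ ‖y‖ + B := by
    have := norm_sub_le y z
    linarith
  have hd := norm_sub_smul_normalize (y := y) (v := v) (τ := τ) (norm_pos_iff.1 hy0) hτ.le
    (by linarith) (norm_pos_iff.1 (by linarith))
  rw [show y - v = z by simp [hv]] at hd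
  set r := ‖v‖ with hr
  set r' := ‖v - (τ / ‖y‖) • y‖ with hr'
  have hr'r : |r - r'| ≤ τ := by
    refine (abs_norm_sub_norm_le _ _).trans (le_of_eq ?_)
    rw [sub_sub_cancel, norm_smul, norm_div, norm_norm, div_mul_cancel₀ _ hy0.ne',
      Real.norm_eq_abs, abs_of_pos hτ]
  have hr1 := abs_le.1 hr'r
  have k1 := h2 r (by linarith)
  have k2 := hlip (r := r - τ) (s := r') (by linarith) (by linarith)
  have k3 : C * |r - τ - r'| ≤ c / 2 := by
    rw [abs_sub_comm]
    have : 2 * τ * ‖z‖ / ‖y‖ ≤ c / (2 * C) := by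
      rw [div_le_div_iff₀ hy0 (by positivity)]
      have h5 : 4 * τ * B * C / c * c ≤ ‖y‖ * c := by gcongr; linarith
      rw [div_mul_cancel₀ _ hc.ne'] at h5
      have : 2 * τ * ‖z‖ * (2 * C) ≤ 2 * τ * B * (2 * C) := by gcongr
      linarith
    calc _ ≤ C * (c / (2 * C)) := by gcongr; exact hd.trans this
      _ = _ := by field_simp
  have k4 : c / 2 ≤ |bU μ r| + |bU μ r'| := by
    have := abs_sub_abs_le_abs_sub (bU μ (r - τ)) (bU μ r')
    linarith
  have key : ∀ ρ : ℝ, 1 ≤ ρ → ρ ≤ 2 * (1 + ‖y‖) →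
      |bU μ ρ| * (2 ^ (-(μ + 1)) * (1 + ‖y‖) ^ (-(μ + 1))) ≤ |bI μ ρ| := fun ρ h1 hρ => by
    rw [bU, abs_mul, abs_of_nonneg (by positivity), ← Real.mul_rpow (by norm_num) (by positivity)]
    have : (2 * (1 + ‖y‖)) ^ (-(μ + 1)) ≤ ρ ^ (-(μ + 1)) :=
      Real.rpow_le_rpow_of_nonpos (by linarith) hρ (by linarith)
    calc _ ≤ ρ ^ (μ + 1) * |bI μ ρ| * ρ ^ (-(μ + 1)) := by gcongr
      _ = |bI μ ρ| * (ρ ^ (μ + 1) * ρ ^ (-(μ + 1))) := by ring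
      _ = _ := by rw [← Real.rpow_add (by linarith)]; simp
  have q1 := key r (by linarith) (by linarith)
  have q2 := key r' (by linarith) (by linarith)
  rw [brKernel_eq_bI hδ, brKernel_eq_bI hδ, Complex.norm_real, Complex.norm_real, norm_mul,
    norm_mul, Real.norm_eq_abs, Real.norm_eq_abs, Real.norm_eq_abs, abs_of_pos hs,
    norm_sub_rev z y, show z + (τ / ‖y‖) • y - y = -(v - (τ / ‖y‖) • y) by rw [hv]; abel, norm_neg]
  rw [← mul_add, mul_assoc]
  gcongr
  have hP : 0 ≤ (2 : ℝ) ^ (-(μ + 1)) * (1 + ‖y‖) ^ (-(μ + 1)) := by positivity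
  calc _ = c / 2 * ((2 : ℝ) ^ (-(μ + 1)) * (1 + ‖y‖) ^ (-(μ + 1))) := by ring
    _ ≤ (|bU μ r| + |bU μ r'|) * ((2 : ℝ) ^ (-(μ + 1)) * (1 + ‖y‖) ^ (-(μ + 1))) := by gcongr
    _ ≤ _ := by rw [add_mul]; exact add_le_add q1 q2

/-- The average of the kernel over a set of positive measure has no zeros and attains the optimal
rate of decay. -/
theorem exists_integral_brKernel_ge {m : ℕ} {δ : ℝ} (hδ : 0 < δ) {E : Set (Euc (m + 1))}
    (hE : IsCompact E) (h0 : volume E ≠ 0) :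
    ∃ c : ℝ, 0 < c ∧ ∀ y, c * (1 + ‖y‖) ^ (-(δ + m / 2 + 1)) ≤
      ∫ z in E, ‖brKernel (m + 1) δ (z - y)‖ := by
  set K := brKernel (m + 1) δ with hK
  have hKc : Continuous K := continuous_brKernel hδ
  obtain ⟨ρ, hρ, hEρ⟩ := exists_measure_inter_translate hE h0
  obtain ⟨B, hB⟩ := hE.isBounded.exists_norm_le
  set τ := min (ρ / 2) (1 / 4) with hτ
  have hτ0 : 0 < τ := by positivity
  obtain ⟨c, Y, hc, hY, h2⟩ := exists_brKernel_two_point (m := m) hδ hτ0 (min_le_right _ _)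
    (max B 0) (le_max_right _ _)
  have hKint (y : Euc (m + 1)) (F : Set (Euc (m + 1))) (hF : F ⊆ E) :
      IntegrableOn (fun z => ‖K (z - y)‖) F :=
    (ContinuousOn.integrableOn_compact hE (by fun_prop)).mono_set hF
  have hvE : 0 < volume.real E := ENNReal.toReal_pos h0 hE.measure_ne_top
  -- for large `‖y‖` the points `z` and `z + h`, with `h` a short vector along `y`, are not both
  -- near zeros of `K(· - y)`, and at least half of `E` consists of `z` for which both lie in `E`
  have far : ∀ y : Euc (m + 1), Y ≤ ‖y‖ →
      c / 4 * volume.real E * (1 + ‖y‖) ^ (-(δ + m / 2 + 1)) ≤ ∫ z in E, ‖K (z - y)‖ := by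
    intro y hy
    have hy0 : 0 < ‖y‖ := by linarith
    set h := (τ / ‖y‖) • y with hh
    have hnh : ‖h‖ < ρ := by
      rw [hh, norm_smul, norm_div, norm_norm, div_mul_cancel₀ _ hy0.ne', Real.norm_eq_abs,
        abs_of_pos hτ0]
      have := min_le_left (ρ / 2) (1 / 4)
      linarith
    set F := E ∩ (fun z => z + h) ⁻¹' E with hF
    have hFE : F ⊆ E := inter_subset_left
    have hFm : MeasurableSet F :=
      hE.measurableSet.inter (hE.measurableSet.preimage (by fun_prop))
    have hvF : volume.real E ≤ 2 * volume.real F := by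
      have := hEρ h hnh
      have hF' : volume F ≠ ⊤ := ((measure_mono hFE).trans_lt hE.measure_lt_top).ne
      have := ENNReal.toReal_mono (ENNReal.mul_ne_top (by simp) hF') this
      simpa [Measure.real] using this
    have i1 : ∫ z in F, ‖K (z - y)‖ ≤ ∫ z in E, ‖K (z - y)‖ :=
      setIntegral_mono_set (hKint y E subset_rfl) (Filter.Eventually.of_forall fun _ => norm_nonneg _)
        (LE.le.eventuallyLE hFE)
    have hmp : MeasurePreserving (fun z : Euc (m + 1) => z + h) :=
      measurePreserving_add_right volume h
    have hme : MeasurableEmbedding (fun z : Euc (m + 1) => z + h) := measurableEmbedding_addRight h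
    have i2 : ∫ z in F, ‖K (z + h - y)‖ ≤ ∫ z in E, ‖K (z - y)‖ := by
      rw [← hmp.setIntegral_preimage_emb hme (fun z => ‖K (z - y)‖) E]
      refine setIntegral_mono_set ?_ (Filter.Eventually.of_forall fun _ => norm_nonneg _)
        (LE.le.eventuallyLE inter_subset_right)
      exact (hmp.integrableOn_comp_preimage hme).2 (hKint y E subset_rfl)
    have hKint2 : IntegrableOn (fun z => ‖K (z + h - y)‖) F := by
      have := (hmp.integrableOn_comp_preimage hme).2 (hKint y E subset_rfl)
      exact this.mono_set inter_subset_right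
    have i3 : volume.real F * (c * (1 + ‖y‖) ^ (-(δ + m / 2 + 1))) ≤
        (∫ z in F, ‖K (z - y)‖) + ∫ z in F, ‖K (z + h - y)‖ := by
      rw [← integral_add (hKint y F hFE) hKint2]
      have hF' : volume F < ⊤ := ((measure_mono hFE).trans_lt hE.measure_lt_top)
      have : ∫ z in F, (c * (1 + ‖y‖) ^ (-(δ + m / 2 + 1))) =
          volume.real F * (c * (1 + ‖y‖) ^ (-(δ + m / 2 + 1))) := by
        rw [setIntegral_const, smul_eq_mul]
      rw [← this]
      refine setIntegral_mono_on (integrableOn_const hF'.ne)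
        ((hKint y F hFE).add hKint2) hFm fun z hz => ?_
      exact h2 y z hy ((hB z (hFE hz)).trans (le_max_left _ _))
    have hP : 0 ≤ c * (1 + ‖y‖) ^ (-(δ + m / 2 + 1)) := by positivity
    nlinarith [mul_le_mul_of_nonneg_right hvF hP]
  -- for bounded `y` the average is continuous and positive, so it has a positive minimum
  have hJ : Continuous fun y => ∫ z in E, ‖K (z - y)‖ :=
    continuous_parametric_integral_of_continuous (f := fun y z => ‖K (z - y)‖) (by fun_prop) hE
  have hJpos : ∀ y, 0 < ∫ z in E, ‖K (z - y)‖ := by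
    intro y
    rw [setIntegral_pos_iff_support_of_nonneg_ae
      (Filter.Eventually.of_forall fun _ => norm_nonneg _) (hKint y E subset_rfl)]
    have hae : ∀ᵐ z : Euc (m + 1), K (z - y) ≠ 0 :=
      (measurePreserving_sub_right volume y).quasiMeasurePreserving.ae (brKernel_ne_zero_ae hδ)
    have : volume (Function.support (fun z => ‖K (z - y)‖) ∩ E) = volume E := by
      refine measure_congr ?_
      filter_upwards [hae] with z hz
      have : z ∈ Function.support (fun z => ‖K (z - y)‖) := by simpa using hz
      exact propext ⟨fun h => h.2, fun h => ⟨this, h⟩⟩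
    rw [this]
    exact pos_iff_ne_zero.2 h0
  obtain ⟨y₀, -, hy₀⟩ := (isCompact_closedBall (0 : Euc (m + 1)) Y).exists_isMinOn
    ⟨0, by simp; linarith⟩ hJ.continuousOn
  refine ⟨min (c / 4 * volume.real E) (∫ z in E, ‖K (z - y₀)‖),
    lt_min (by positivity) (hJpos _), fun y => ?_⟩
  have hP : 0 ≤ (1 + ‖y‖) ^ (-(δ + (m : ℝ) / 2 + 1)) := by positivity
  rcases le_total Y ‖y‖ with hy | hy
  · exact (mul_le_mul_of_nonneg_right (min_le_left _ _) hP).trans (far y hy)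
  · refine (mul_le_mul_of_nonneg_right (min_le_right _ _) hP).trans ?_
    refine (mul_le_of_le_one_right (hJpos _).le ?_).trans
      (hy₀ (by simpa using hy : y ∈ Metric.closedBall 0 Y))
    apply Real.rpow_le_one_of_one_le_of_nonpos
    · linarith [norm_nonneg y]
    · have : 0 ≤ (m : ℝ) := by positivity
      linarith

/-- If `T_1 f` is not almost everywhere zero, so that the defining integral converges on a set of
positive measure, then `f` is measurable and integrable against the majorant of the kernel. -/
theorem good_of_brOp_one {m : ℕ} {δ : ℝ} (hδ : 0 < δ) {f : Euc (m + 1) → ℂ}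
    (hf : ¬ ∀ᵐ x, brOp (m + 1) δ 1 f x = 0) :
    AEStronglyMeasurable f volume ∧
      ∫⁻ y, ENNReal.ofReal ((1 + ‖y‖) ^ (-(δ + m / 2 + 1))) * ‖f y‖ₑ ≠ ⊤ := by
  set K := brKernel (m + 1) δ with hK
  have hKc : Continuous K := continuous_brKernel hδ
  set S := {x | Integrable fun y => K (x - y) * f y} with hS
  have hS0 : volume S ≠ 0 := by
    intro h
    refine hf ?_
    have : ∀ᵐ x, x ∉ S := measure_eq_zero_iff_ae_notMem.1 h
    filter_upwards [this] with x hx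
    simp only [brOp, dil, inv_one, one_pow, one_smul]
    exact integral_undef hx
  have hfm : AEStronglyMeasurable f volume := by
    obtain ⟨x, hx⟩ := nonempty_of_measure_ne_zero hS0
    have hae : ∀ᵐ y : Euc (m + 1), K (x - y) ≠ 0 :=
      (Measure.measurePreserving_sub_left volume x).quasiMeasurePreserving.ae (brKernel_ne_zero_ae hδ)
    have h1 : AEStronglyMeasurable (fun y => (K (x - y))⁻¹ * (K (x - y) * f y)) volume := by
      refine AEStronglyMeasurable.mul ?_ hx.aestronglyMeasurable
      exact ((hKc.measurable.comp (measurable_const.sub measurable_id)).inv).aestronglyMeasurable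
    refine h1.congr ?_
    filter_upwards [hae] with y hy
    rw [inv_mul_cancel_left₀ hy]
  refine ⟨hfm, ?_⟩
  set H : Euc (m + 1) → ℝ≥0∞ := fun x => ∫⁻ y, ‖K (x - y)‖ₑ * ‖hfm.mk f y‖ₑ with hH
  have hjm : Measurable fun z : Euc (m + 1) × Euc (m + 1) => ‖K (z.1 - z.2)‖ₑ * ‖hfm.mk f z.2‖ₑ := by
    have := hfm.stronglyMeasurable_mk.measurable
    have := hKc.measurable
    fun_prop
  have hHm : Measurable H := hjm.lintegral_prod_right'
  have hSH : S ⊆ ⋃ k : ℕ, {x | H x ≤ k} := by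
    intro x hx
    have h1 : H x ≠ ⊤ := by
      have : H x = ∫⁻ y, ‖K (x - y) * f y‖ₑ := by
        refine lintegral_congr_ae ?_
        filter_upwards [hfm.ae_eq_mk] with y hy
        rw [enorm_mul, hy]
      rw [this]
      exact hx.2.ne
    obtain ⟨k, hk⟩ := ENNReal.exists_nat_gt h1
    exact mem_iUnion.2 ⟨k, hk.le⟩
  obtain ⟨k, hk⟩ : ∃ k : ℕ, volume {x | H x ≤ k} ≠ 0 := by
    by_contra! h
    exact hS0 (measure_mono_null hSH (measure_iUnion_null h))
  obtain ⟨E, hEk, hE, hE0⟩ := (measurableSet_le hHm measurable_const).exists_lt_isCompact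
    (pos_iff_ne_zero.2 hk)
  obtain ⟨c, hc, hcE⟩ := exists_integral_brKernel_ge hδ hE hE0.ne'
  have h1 : ∫⁻ x in E, H x ≠ ⊤ := by
    have : ∫⁻ x in E, H x ≤ ∫⁻ x in E, k := setLIntegral_mono measurable_const fun x hx => hEk hx
    refine (this.trans_lt ?_).ne
    rw [setLIntegral_const]
    exact ENNReal.mul_lt_top (by simp) hE.measure_lt_top
  rw [hH, lintegral_lintegral_swap hjm.aemeasurable] at h1
  have h2 : ENNReal.ofReal c * ∫⁻ y, ENNReal.ofReal ((1 + ‖y‖) ^ (-(δ + m / 2 + 1))) * ‖f y‖ₑ ≤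
      ∫⁻ y, ∫⁻ x in E, ‖K (x - y)‖ₑ * ‖hfm.mk f y‖ₑ := by
    rw [← lintegral_const_mul' _ _ ENNReal.ofReal_ne_top]
    refine lintegral_mono_ae ?_
    filter_upwards [hfm.ae_eq_mk] with y hy
    rw [lintegral_mul_const _ (by have := hKc.measurable; fun_prop), ← hy, ← mul_assoc, ← ENNReal.ofReal_mul hc.le]
    gcongr
    rw [← ofReal_integral_norm_eq_lintegral_enorm]
    · exact ENNReal.ofReal_le_ofReal (hcE y)
    · exact ContinuousOn.integrableOn_compact hE (by fun_prop)
  intro h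
  rw [h, ENNReal.mul_top (by simpa using hc)] at h2
  exact h1 (top_le_iff.1 h2)

/-- Scaling reduces `T_R` to `T_1`. -/
theorem brOp_eq_brOp_one {m : ℕ} {δ R : ℝ} (hR : 0 < R) (f : Euc (m + 1) → ℂ) (x : Euc (m + 1)) :
    brOp (m + 1) δ R f x = brOp (m + 1) δ 1 (fun y => f (R⁻¹ • y)) (R • x) := by
  simp only [brOp, dil, inv_one, one_pow, one_smul, inv_inv]
  have := Measure.integral_comp_smul (volume : Measure (Euc (m + 1)))
    (fun y => brKernel (m + 1) δ (R • x - y) * f (R⁻¹ • y)) R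
  simp only [finrank_euclideanSpace, Fintype.card_fin, inv_smul_smul₀ hR.ne', ← smul_sub] at this
  rw [abs_of_pos (by positivity), eq_inv_smul_iff₀ (by positivity)] at this
  rw [← this, ← integral_smul]
  simp [inv_pow, mul_assoc]

/-- Measurable functions with `∫ (1 + |y|)^(-b) |f(y)| dy < ∞`: convolutions with kernels of decay
`(1 + |y|)^(-b)` converge absolutely at every point. -/
def IsGood {n : ℕ} (b : ℝ) (f : Euc n → ℂ) : Prop :=
  AEStronglyMeasurable f volume ∧
    ∫⁻ y, ENNReal.ofReal ((1 + ‖y‖) ^ (-b)) * ‖f y‖ₑ ≠ ⊤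

theorem isGood_of_brOp {m : ℕ} {δ R : ℝ} (hδ : 0 < δ) (hR : 0 < R) {f : Euc (m + 1) → ℂ}
    (hf : ¬ ∀ᵐ x, brOp (m + 1) δ R f x = 0) : IsGood (δ + m / 2 + 1) f := by
  have hq : Measure.QuasiMeasurePreserving (fun x : Euc (m + 1) => R • x) volume volume := by
    refine ⟨by fun_prop, ?_⟩
    rw [Measure.map_addHaar_smul _ hR.ne']
    exact Measure.smul_absolutelyContinuous
  obtain ⟨h1, h2⟩ := good_of_brOp_one hδ (f := fun y => f (R⁻¹ • y)) fun h => hf <| by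
    filter_upwards [hq.ae h] with x hx
    rw [brOp_eq_brOp_one hR, hx]
  have h1' : AEStronglyMeasurable f volume := by
    have := h1.comp_quasiMeasurePreserving hq
    simpa [Function.comp_def, inv_smul_smul₀ hR.ne'] using this
  refine ⟨h1', fun htop => h2 ?_⟩
  have ha : 0 ≤ δ + (m : ℝ) / 2 + 1 := by positivity
  set a := δ + (m : ℝ) / 2 + 1
  have hmeas : AEMeasurable (fun y => ENNReal.ofReal ((1 + ‖y‖) ^ (-a)) * ‖f (R⁻¹ • y)‖ₑ) volume :=
    AEMeasurable.mul (by fun_prop) h1.enorm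
  have e1 : ∫⁻ y, ENNReal.ofReal ((1 + ‖R • y‖) ^ (-a)) * ‖f y‖ₑ = ENNReal.ofReal |(R ^ (m + 1))⁻¹| *
      ∫⁻ y, ENNReal.ofReal ((1 + ‖y‖) ^ (-a)) * ‖f (R⁻¹ • y)‖ₑ := by
    have hmap := Measure.map_addHaar_smul (volume : Measure (Euc (m + 1))) hR.ne'
    have : ∫⁻ y, ENNReal.ofReal ((1 + ‖R • y‖) ^ (-a)) * ‖f y‖ₑ = ∫⁻ y,
        ENNReal.ofReal ((1 + ‖y‖) ^ (-a)) * ‖f (R⁻¹ • y)‖ₑ ∂(Measure.map (R • ·) volume) := by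
      rw [lintegral_map' (by rw [hmap]; exact hmeas.smul_measure _) (by fun_prop)]
      simp [inv_smul_smul₀ hR.ne']
    rw [this, hmap, lintegral_smul_measure]
    simp
  have e2 : ENNReal.ofReal ((max 1 R) ^ (-a)) *
      ∫⁻ y, ENNReal.ofReal ((1 + ‖y‖) ^ (-a)) * ‖f y‖ₑ ≤
      ∫⁻ y, ENNReal.ofReal ((1 + ‖R • y‖) ^ (-a)) * ‖f y‖ₑ := by
    rw [← lintegral_const_mul' _ _ ENNReal.ofReal_ne_top]
    refine lintegral_mono fun y => ?_
    rw [← mul_assoc, ← ENNReal.ofReal_mul (by positivity),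
      ← Real.mul_rpow (by positivity) (by positivity)]
    gcongr ENNReal.ofReal ?_ * _
    refine Real.rpow_le_rpow_of_nonpos (by positivity) ?_ (by linarith)
    rw [norm_smul, Real.norm_eq_abs, abs_of_pos hR, mul_add]
    have := norm_nonneg y
    gcongr
    · simp
    · exact le_max_right _ _
  rw [htop, ENNReal.mul_top (by simp; positivity), top_le_iff, e1] at e2
  by_contra h
  exact ENNReal.mul_ne_top ENNReal.ofReal_ne_top h e2

/-! ### Radial majorants and the maximal function -/

/-- The radial majorant `τ⁻ⁿ (1 + |y| / τ)⁻ᵇ`. -/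
def pk {n : ℕ} (b τ : ℝ) (y : Euc n) : ℝ := (τ ^ n)⁻¹ * (1 + ‖y‖ / τ) ^ (-b)

/-- The `ℝ≥0∞`-valued version of `pk`. -/
def epk {n : ℕ} (b τ : ℝ) (y : Euc n) : ℝ≥0∞ := ENNReal.ofReal (pk b τ y)

/-- The total mass of the majorants. -/
def pkMass (n : ℕ) (b : ℝ) : ℝ≥0∞ := ∫⁻ y : Euc n, ENNReal.ofReal ((1 + ‖y‖) ^ (-b))

theorem pkMass_ne_top {n : ℕ} {b : ℝ} (hb : n < b) : pkMass n b ≠ ⊤ := by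
  have := finite_integral_one_add_norm (E := Euc n) (μ := volume) (r := b) (by simpa using hb)
  exact this.ne

theorem pk_nonneg {n : ℕ} {b τ : ℝ} (hτ : 0 < τ) (y : Euc n) : 0 ≤ pk b τ y := by
  unfold pk; positivity

theorem pk_pos {n : ℕ} {b τ : ℝ} (hτ : 0 < τ) (y : Euc n) : 0 < pk b τ y := by
  unfold pk; positivity

theorem continuous_pk {n : ℕ} {b τ : ℝ} (hτ : 0 < τ) : Continuous (pk (n := n) b τ) := by
  unfold pk
  refine continuous_const.mul (Continuous.rpow_const (by fun_prop) fun y => Or.inl ?_)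
  have : 0 ≤ ‖y‖ / τ := by positivity
  positivity

theorem measurable_epk {n : ℕ} {b τ : ℝ} : Measurable (epk (n := n) b τ) := by
  unfold epk pk; fun_prop

theorem epk_ne_top {n : ℕ} {b τ : ℝ} (y : Euc n) : epk b τ y ≠ ⊤ := ENNReal.ofReal_ne_top

theorem measurable_epk_sub {n : ℕ} {b τ : ℝ} (x : Euc n) : Measurable fun y => epk b τ (x - y) :=
  measurable_epk.comp (measurable_const.sub measurable_id)

@[simp] theorem pk_neg {n : ℕ} {b τ : ℝ} (y : Euc n) : pk b τ (-y) = pk b τ y := by simp [pk]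
@[simp] theorem epk_neg {n : ℕ} {b τ : ℝ} (y : Euc n) : epk b τ (-y) = epk b τ y := by simp [epk]

theorem lintegral_comp_smul_euc {n : ℕ} {f : Euc n → ℝ≥0∞} (hf : Measurable f) {r : ℝ}
    (hr : 0 < r) : ∫⁻ y, f (r • y) = ENNReal.ofReal ((r ^ n)⁻¹) * ∫⁻ y, f y := by
  have hmap := Measure.map_addHaar_smul (volume : Measure (Euc n)) hr.ne'
  rw [← lintegral_map (μ := volume) (g := fun y : Euc n => r • y) hf (by fun_prop)]
  rw [hmap, lintegral_smul_measure, smul_eq_mul, finrank_euclideanSpace, Fintype.card_fin,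
    abs_of_pos (by positivity)]

theorem lintegral_epk {n : ℕ} {b τ : ℝ} (hτ : 0 < τ) : ∫⁻ y : Euc n, epk b τ y = pkMass n b := by
  have h := lintegral_comp_smul_euc (n := n) (f := fun y => ENNReal.ofReal ((1 + ‖y‖) ^ (-b)))
    (by fun_prop) (inv_pos.2 hτ)
  have e : ∀ y : Euc n, epk b τ y =
      ENNReal.ofReal ((τ ^ n)⁻¹) * ENNReal.ofReal ((1 + ‖τ⁻¹ • y‖) ^ (-b)) := fun y => by
    rw [epk, pk, ENNReal.ofReal_mul (by positivity), norm_smul, norm_inv, Real.norm_eq_abs,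
      abs_of_pos hτ, inv_mul_eq_div]
  simp only [e]
  rw [lintegral_const_mul' _ _ ENNReal.ofReal_ne_top, h, ← mul_assoc,
    ← ENNReal.ofReal_mul (by positivity), pkMass]
  rw [inv_pow, inv_inv, inv_mul_cancel₀ (by positivity), ENNReal.ofReal_one, one_mul]

theorem lintegral_epk_sub {n : ℕ} {b τ : ℝ} (hτ : 0 < τ) (x : Euc n) :
    ∫⁻ y : Euc n, epk b τ (x - y) = pkMass n b := by
  rw [lintegral_sub_left_eq_self (epk b τ) x, lintegral_epk hτ]

theorem pk_mul_pk_le {n : ℕ} {b s τ : ℝ} (hs : 0 < s) (hsτ : s ≤ τ) (hb : n < b) (v y : Euc n) :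
    pk b s v * pk b τ y ≤ 2 ^ b * pk b τ (v + y) * (pk b s v + pk b τ y) := by
  have hτ : 0 < τ := hs.trans_le hsτ
  have hb0 : 0 < b := lt_of_le_of_lt (by positivity) hb
  have h1 : 1 + ‖v + y‖ / τ ≤ 1 + ‖y‖ / τ + ‖v‖ / τ := by
    have : ‖v + y‖ / τ ≤ (‖v‖ + ‖y‖) / τ := by gcongr; exact norm_add_le _ _
    rw [add_div] at this
    linarith
  have hp1 := pk_nonneg (b := b) hs v
  have hp2 := pk_nonneg (b := b) hτ y
  have hp3 := pk_nonneg (b := b) hτ (v + y)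
  have hx : 0 ≤ ‖v + y‖ / τ := by positivity
  have aux : ∀ q : ℝ, 0 < q → 1 + ‖v + y‖ / τ ≤ 2 * q →
      (τ ^ n)⁻¹ * q ^ (-b) ≤ 2 ^ b * pk b τ (v + y) := fun q hq hle => by
    have : (2 * q) ^ (-b) ≤ (1 + ‖v + y‖ / τ) ^ (-b) :=
      Real.rpow_le_rpow_of_nonpos (by positivity) hle (by linarith)
    rw [Real.mul_rpow (by norm_num) hq.le] at this
    rw [pk]
    calc _ = (2 : ℝ) ^ b * ((τ ^ n)⁻¹ * (2 ^ (-b) * q ^ (-b))) := by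
            have : (2 : ℝ) ^ b * 2 ^ (-b) = 1 := by rw [← Real.rpow_add two_pos]; simp
            linear_combination (-(τ ^ n)⁻¹ * q ^ (-b)) * this
      _ ≤ _ := by gcongr
  rcases le_total (‖v‖ / τ) (1 + ‖y‖ / τ) with h | h
  · have : pk b τ y ≤ 2 ^ b * pk b τ (v + y) := aux (1 + ‖y‖ / τ) (by positivity) (by linarith)
    calc _ ≤ pk b s v * (2 ^ b * pk b τ (v + y)) := by gcongr
      _ ≤ _ := by rw [mul_comm]; gcongr; linarith
  · have hv : 0 < ‖v‖ / τ := by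
      have : 0 ≤ ‖y‖ / τ := by positivity
      linarith
    have hv' : 0 < ‖v‖ := by
      by_contra! hc
      exact absurd hv (not_lt.2 (div_nonpos_of_nonpos_of_nonneg hc hτ.le))
    have : pk b s v ≤ 2 ^ b * pk b τ (v + y) := by
      refine le_trans ?_ (aux (‖v‖ / τ) hv (by linarith))
      have e1 : pk b s v ≤ s ^ (b - n) * ‖v‖ ^ (-b) := by
        have : (1 + ‖v‖ / s) ^ (-b) ≤ (‖v‖ / s) ^ (-b) :=
          Real.rpow_le_rpow_of_nonpos (by positivity) (by linarith) (by linarith)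
        rw [pk]
        refine (mul_le_mul_of_nonneg_left this (by positivity)).trans (le_of_eq ?_)
        rw [Real.div_rpow hv'.le hs.le, Real.rpow_sub hs, Real.rpow_neg hs.le, Real.rpow_natCast]
        field_simp
      have e2 : (τ ^ n)⁻¹ * (‖v‖ / τ) ^ (-b) = τ ^ (b - n) * ‖v‖ ^ (-b) := by
        rw [Real.div_rpow hv'.le hτ.le, Real.rpow_sub hτ, Real.rpow_neg hτ.le, Real.rpow_natCast]
        field_simp
      rw [e2]
      refine e1.trans ?_
      gcongr
    calc _ ≤ (2 ^ b * pk b τ (v + y)) * pk b τ y := by gcongr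
      _ ≤ _ := by gcongr; linarith

/-- Convolving with a majorant of smaller scale does not spoil a majorant. -/
theorem lintegral_epk_mul_epk_le {n : ℕ} {b s τ : ℝ} (hs : 0 < s) (hsτ : s ≤ τ) (hb : n < b)
    (x z : Euc n) : ∫⁻ y, epk b s (x - y) * epk b τ (y - z) ≤
      ENNReal.ofReal (2 ^ b) * (2 * pkMass n b) * epk b τ (x - z) := by
  have hτ : 0 < τ := hs.trans_le hsτ
  calc _ ≤ ∫⁻ y, ENNReal.ofReal (2 ^ b) * epk b τ (x - z) *
        (epk b s (x - y) + epk b τ (y - z)) := by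
        refine lintegral_mono fun y => ?_
        have := pk_mul_pk_le hs hsτ hb (x - y) (y - z)
        rw [sub_add_sub_cancel] at this
        simp only [epk]
        rw [← ENNReal.ofReal_mul (pk_nonneg hs _), ← ENNReal.ofReal_mul (by positivity),
          ← ENNReal.ofReal_add (pk_nonneg hs _) (pk_nonneg hτ _), ← ENNReal.ofReal_mul
            (mul_nonneg (by positivity) (pk_nonneg hτ _))]
        exact ENNReal.ofReal_le_ofReal this
    _ = _ := by
        have hne : ENNReal.ofReal (2 ^ b) * epk b τ (x - z) ≠ ⊤ :=
          ENNReal.mul_ne_top ENNReal.ofReal_ne_top ENNReal.ofReal_ne_top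
        rw [lintegral_const_mul' _ _ hne,
          lintegral_add_left (measurable_epk_sub x), lintegral_epk_sub hs,
          lintegral_sub_right_eq_self (epk b τ) z, lintegral_epk hτ]
        ring

/-- The centred Hardy-Littlewood maximal function over balls, normalised by `ρⁿ`. -/
def bMax {n : ℕ} (h : Euc n → ℝ≥0∞) (x : Euc n) : ℝ≥0∞ :=
  ⨆ (ρ : ℝ) (_ : 0 < ρ), ENNReal.ofReal ((ρ ^ n)⁻¹) * ∫⁻ y in Metric.closedBall x ρ, h y

theorem lintegral_closedBall_le {n : ℕ} (h : Euc n → ℝ≥0∞) (x : Euc n) {ρ : ℝ} (hρ : 0 < ρ) :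
    ∫⁻ y in Metric.closedBall x ρ, h y ≤ ENNReal.ofReal (ρ ^ n) * bMax h x := by
  have : ENNReal.ofReal ((ρ ^ n)⁻¹) * ∫⁻ y in Metric.closedBall x ρ, h y ≤ bMax h x :=
    le_iSup₂_of_le ρ hρ le_rfl
  calc _ = ENNReal.ofReal (ρ ^ n) *
        (ENNReal.ofReal ((ρ ^ n)⁻¹) * ∫⁻ y in Metric.closedBall x ρ, h y) := by
        rw [← mul_assoc, ← ENNReal.ofReal_mul (by positivity), mul_inv_cancel₀ (by positivity),
          ENNReal.ofReal_one, one_mul]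
    _ ≤ _ := by gcongr

/-- The constant in the bound of a convolution with a majorant by the maximal function. -/
def pkMaxConst (n : ℕ) (b : ℝ) : ℝ≥0∞ := ∑' k : ℕ, ENNReal.ofReal (2 ^ b * (2 ^ ((n : ℝ) - b)) ^ k)

theorem pkMaxConst_ne_top {n : ℕ} {b : ℝ} (hb : n < b) : pkMaxConst n b ≠ ⊤ := by
  have hs : Summable fun k : ℕ => (2 : ℝ) ^ b * (2 ^ ((n : ℝ) - b)) ^ k :=
    (summable_geometric_of_lt_one (by positivity)
      (Real.rpow_lt_one_of_one_lt_of_neg one_lt_two (by linarith))).mul_left _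
  rw [pkMaxConst, ← ENNReal.ofReal_tsum_of_nonneg (fun k => by positivity) hs]
  exact ENNReal.ofReal_ne_top

theorem lintegral_epk_mul_le {n : ℕ} {b τ : ℝ} (hτ : 0 < τ) (hb : n < b) {h : Euc n → ℝ≥0∞}
    (hh : Measurable h) (x : Euc n) :
    ∫⁻ z, epk b τ (x - z) * h z ≤ pkMaxConst n b * bMax h x := by
  have hb0 : 0 < b := lt_of_le_of_lt (by positivity) hb
  have key : ∀ z, epk b τ (x - z) * h z ≤ ∑' k : ℕ,
      (Metric.closedBall x (2 ^ k * τ)).indicator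
        (fun z => ENNReal.ofReal (2 ^ b * (τ ^ n)⁻¹ * ((2 : ℝ) ^ k) ^ (-b)) * h z) z := by
    intro z
    have hq : 1 ≤ 1 + ‖x - z‖ / τ := by
      have : 0 ≤ ‖x - z‖ / τ := by positivity
      linarith
    obtain ⟨k, hk1, hk2⟩ := exists_nat_pow_near hq one_lt_two
    refine le_trans ?_ (ENNReal.le_tsum (k + 1))
    have hmem : z ∈ Metric.closedBall x (2 ^ (k + 1) * τ) := by
      rw [Metric.mem_closedBall, dist_comm, dist_eq_norm, ← div_le_iff₀ hτ]
      linarith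
    rw [indicator_of_mem hmem]
    gcongr
    rw [epk, pk]
    refine ENNReal.ofReal_le_ofReal ?_
    have : (1 + ‖x - z‖ / τ) ^ (-b) ≤ ((2 : ℝ) ^ k) ^ (-b) :=
      Real.rpow_le_rpow_of_nonpos (by positivity) hk1 (by linarith)
    rw [pow_succ, Real.mul_rpow (by positivity) (by norm_num)]
    have h2 : (2 : ℝ) ^ b * 2 ^ (-b) = 1 := by rw [← Real.rpow_add two_pos]; simp
    calc _ ≤ (τ ^ n)⁻¹ * ((2 : ℝ) ^ k) ^ (-b) := by gcongr
      _ = _ := by linear_combination (-(τ ^ n)⁻¹ * ((2 : ℝ) ^ k) ^ (-b)) * h2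
  refine (lintegral_mono key).trans ?_
  rw [lintegral_tsum fun k => ((hh.const_mul _).indicator measurableSet_closedBall).aemeasurable,
    pkMaxConst, ← ENNReal.tsum_mul_right]
  refine ENNReal.tsum_le_tsum fun k => ?_
  rw [lintegral_indicator measurableSet_closedBall, lintegral_const_mul _ hh]
  refine (mul_le_mul_right (lintegral_closedBall_le h x (by positivity)) _).trans ?_
  rw [← mul_assoc, ← ENNReal.ofReal_mul (by positivity)]
  refine mul_le_mul_left (ENNReal.ofReal_le_ofReal (le_of_eq ?_)) _
  rw [← Real.rpow_natCast 2 k, ← Real.rpow_natCast (2 ^ ((n : ℝ) - b)) k, mul_pow,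
    ← Real.rpow_mul two_pos.le, ← Real.rpow_mul two_pos.le, ← Real.rpow_natCast (2 ^ (k : ℝ)) n,
    ← Real.rpow_mul two_pos.le]
  have : (2 : ℝ) ^ (((n : ℝ) - b) * k) = 2 ^ ((k : ℝ) * -b) * 2 ^ ((k : ℝ) * n) := by
    rw [← Real.rpow_add two_pos]; ring_nf
  rw [this]
  field_simp

/-- For a function `F` dominated at scale `τ` by `G`, convolutions with majorants of scale at most `τ`
are controlled by the maximal function of `G ^ q`. The exponent `b > n / q` suffices because only
`F ^ q` is averaged; the factor `F ^ (1 - q)` is estimated pointwise. -/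
theorem exists_lintegral_epk_mul_le {n : ℕ} {b q : ℝ} (hq0 : 0 < q) (hq1 : q < 1)
    (hb : n / q < b) :
    ∃ C : ℝ≥0∞, C ≠ ⊤ ∧ ∀ (s τ : ℝ), 0 < s → s ≤ τ → ∀ F G : Euc n → ℝ≥0∞, Measurable G →
      (∀ u z, ‖z - u‖ ≤ τ → F u ≤ G z) → ∀ x,
        ∫⁻ u, epk b s (x - u) * F u ≤ C * bMax (fun z => G z ^ q) x ^ (1 / q) := by
  set κ := (1 - q) / q with hκ
  have hκ0 : 0 ≤ κ := div_nonneg (by linarith) hq0.le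
  set b' := b - n * κ with hb'
  have hb'n : n < b' := by
    have : (n : ℝ) * κ = n / q - n := by rw [hκ]; field_simp
    rw [hb', this]; linarith
  have hb'0 : 0 < b' := lt_of_le_of_lt (by positivity) hb'n
  set vn := volume (Metric.ball (0 : Euc n) 1) with hvn
  have hvn0 : vn ≠ 0 := (Metric.measure_ball_pos volume _ one_pos).ne'
  have hvnt : vn ≠ ⊤ := measure_ball_lt_top.ne
  have hvni : vn⁻¹ ≠ ⊤ := ENNReal.inv_ne_top.2 hvn0
  have hκt : (vn⁻¹) ^ κ ≠ ⊤ := (ENNReal.rpow_lt_top_of_nonneg hκ0 hvni).ne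
  refine ⟨(vn⁻¹) ^ κ * (vn⁻¹ * ENNReal.ofReal (2 ^ b')) *
    (ENNReal.ofReal (2 ^ b') * (2 * pkMass n b') * pkMaxConst n b'), ?_,
    fun s τ hs hsτ F G hG hFG x => ?_⟩
  · have := pkMass_ne_top hb'n
    have := pkMaxConst_ne_top hb'n
    finiteness
  have hτ : 0 < τ := hs.trans_le hsτ
  set M := bMax (fun z => G z ^ q) x with hM
  have hτn : ENNReal.ofReal (τ ^ n) * ENNReal.ofReal ((τ ^ n)⁻¹) = 1 := by
    rw [← ENNReal.ofReal_mul (by positivity), mul_inv_cancel₀ (by positivity), ENNReal.ofReal_one]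
  have hF1 : ∀ u, F u ^ q ≤ vn⁻¹ * (ENNReal.ofReal ((τ ^ n)⁻¹) *
      ∫⁻ z in Metric.closedBall u τ, G z ^ q) := by
    intro u
    have h1 : ∫⁻ z in Metric.closedBall u τ, F u ^ q ≤ ∫⁻ z in Metric.closedBall u τ, G z ^ q := by
      refine setLIntegral_mono (hG.pow_const q) fun z hz => ?_
      have := hFG u z (by rwa [Metric.mem_closedBall, dist_eq_norm] at hz)
      gcongr
    rw [setLIntegral_const, Measure.addHaar_closedBall _ _ hτ.le, finrank_euclideanSpace,
      Fintype.card_fin] at h1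
    rw [← hvn] at h1
    calc F u ^ q = (vn⁻¹ * vn) * (ENNReal.ofReal (τ ^ n) * ENNReal.ofReal ((τ ^ n)⁻¹)) * F u ^ q := by
          rw [ENNReal.inv_mul_cancel hvn0 hvnt, hτn, one_mul, one_mul]
      _ = vn⁻¹ * (ENNReal.ofReal ((τ ^ n)⁻¹) * (F u ^ q * (ENNReal.ofReal (τ ^ n) * vn))) := by ring
      _ ≤ _ := by gcongr
  have hA : ∀ u, F u ^ q ≤ vn⁻¹ * ENNReal.ofReal ((1 + ‖x - u‖ / τ) ^ n) * M := by
    intro u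
    refine (hF1 u).trans ?_
    rw [mul_assoc]
    refine mul_le_mul_right ?_ _
    have hsub : Metric.closedBall u τ ⊆ Metric.closedBall x (τ + ‖x - u‖) := by
      apply Metric.closedBall_subset_closedBall'
      rw [dist_comm, dist_eq_norm]
    have h2 := (lintegral_mono_set (μ := volume) (f := fun z => G z ^ q) hsub).trans
      (lintegral_closedBall_le (fun z => G z ^ q) x (ρ := τ + ‖x - u‖) (by positivity))
    refine (mul_le_mul_right h2 _).trans (le_of_eq ?_)
    rw [← mul_assoc, ← ENNReal.ofReal_mul (by positivity), ← inv_pow, ← mul_pow, mul_add,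
      inv_mul_cancel₀ hτ.ne', inv_mul_eq_div]
  set J : Euc n → ℝ≥0∞ := fun u => ∫⁻ z, epk b' τ (u - z) * G z ^ q with hJ
  have hjm : Measurable fun p : Euc n × Euc n => epk b' τ (p.1 - p.2) * G p.2 ^ q :=
    (measurable_epk.comp (by fun_prop)).mul ((hG.comp measurable_snd).pow_const q)
  have hJm : Measurable J := hjm.lintegral_prod_right'
  have hB : ∀ u, F u ^ q ≤ vn⁻¹ * ENNReal.ofReal (2 ^ b') * J u := by
    intro u
    refine (hF1 u).trans ?_
    rw [mul_assoc]
    refine mul_le_mul_right ?_ _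
    rw [← lintegral_const_mul' _ _ ENNReal.ofReal_ne_top,
      ← lintegral_const_mul' _ _ ENNReal.ofReal_ne_top]
    refine le_trans (setLIntegral_mono' measurableSet_closedBall fun z hz => ?_)
      (setLIntegral_le_lintegral (Metric.closedBall u τ) _)
    rw [← mul_assoc, epk, ← ENNReal.ofReal_mul (by positivity)]
    gcongr
    rw [pk]
    have hz' : ‖u - z‖ ≤ τ := by rwa [Metric.mem_closedBall, dist_comm, dist_eq_norm] at hz
    have h3 : (2 : ℝ) ^ (-b') ≤ (1 + ‖u - z‖ / τ) ^ (-b') := by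
      refine Real.rpow_le_rpow_of_nonpos (by positivity) ?_ (by linarith)
      have : ‖u - z‖ / τ ≤ 1 := (div_le_one hτ).2 hz'
      linarith
    have h4 : (2 : ℝ) ^ b' * 2 ^ (-b') = 1 := by rw [← Real.rpow_add two_pos]; simp
    calc (τ ^ n)⁻¹ = 2 ^ b' * ((τ ^ n)⁻¹ * 2 ^ (-b')) := by linear_combination (-(τ ^ n)⁻¹) * h4
      _ ≤ _ := by gcongr
  have hpoint : ∀ u, epk b s (x - u) * F u ≤ (vn⁻¹) ^ κ * (vn⁻¹ * ENNReal.ofReal (2 ^ b')) * M ^ κ *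
      (epk b' s (x - u) * J u) := by
    intro u
    have h1 : F u = (F u ^ q) ^ κ * F u ^ q := by
      rw [← ENNReal.rpow_mul, ← ENNReal.rpow_add_of_nonneg _ _ (by positivity) hq0.le, hκ,
        mul_div_cancel₀ _ hq0.ne']
      simp
    have h2 : (F u ^ q) ^ κ ≤ (vn⁻¹) ^ κ * ENNReal.ofReal (((1 + ‖x - u‖ / τ) ^ n) ^ κ) * M ^ κ := by
      refine (ENNReal.rpow_le_rpow (hA u) hκ0).trans (le_of_eq ?_)
      rw [ENNReal.mul_rpow_of_nonneg _ _ hκ0, ENNReal.mul_rpow_of_nonneg _ _ hκ0,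
        ENNReal.ofReal_rpow_of_nonneg (by positivity) hκ0]
    have h3 : epk b s (x - u) * ENNReal.ofReal (((1 + ‖x - u‖ / τ) ^ n) ^ κ) ≤ epk b' s (x - u) := by
      rw [epk, epk, ← ENNReal.ofReal_mul (pk_nonneg hs _)]
      refine ENNReal.ofReal_le_ofReal ?_
      rw [pk, pk, mul_assoc]
      have h5 : 0 < 1 + ‖x - u‖ / s := by positivity
      gcongr
      calc _ ≤ (1 + ‖x - u‖ / s) ^ (-b) * (((1 + ‖x - u‖ / s) ^ n) ^ κ) := by gcongr
        _ = _ := by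
          rw [← Real.rpow_natCast, ← Real.rpow_mul h5.le, ← Real.rpow_add h5, hb']
          ring_nf
    calc epk b s (x - u) * F u = epk b s (x - u) * ((F u ^ q) ^ κ * F u ^ q) := by rw [← h1]
      _ ≤ epk b s (x - u) * (((vn⁻¹) ^ κ * ENNReal.ofReal (((1 + ‖x - u‖ / τ) ^ n) ^ κ) * M ^ κ) *
          (vn⁻¹ * ENNReal.ofReal (2 ^ b') * J u)) := by gcongr; exact hB u
      _ = (vn⁻¹) ^ κ * (vn⁻¹ * ENNReal.ofReal (2 ^ b')) * M ^ κ *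
          ((epk b s (x - u) * ENNReal.ofReal (((1 + ‖x - u‖ / τ) ^ n) ^ κ)) * J u) := by ring
      _ ≤ _ := by gcongr
  have hI : ∫⁻ u, epk b' s (x - u) * J u ≤
      ENNReal.ofReal (2 ^ b') * (2 * pkMass n b') * pkMaxConst n b' * M := by
    have e1 : ∀ u, epk b' s (x - u) * J u =
        ∫⁻ z, epk b' s (x - u) * (epk b' τ (u - z) * G z ^ q) := fun u => by
      rw [lintegral_const_mul' _ _ (epk_ne_top _)]
    simp only [e1]
    rw [lintegral_lintegral_swap]
    · calc _ = ∫⁻ z, (∫⁻ u, epk b' s (x - u) * epk b' τ (u - z)) * G z ^ q := by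
            refine lintegral_congr fun z => ?_
            rw [← lintegral_mul_const]
            · simp only [mul_assoc]
            · exact (measurable_epk.comp (by fun_prop)).mul (measurable_epk.comp (by fun_prop))
        _ ≤ ∫⁻ z, ENNReal.ofReal (2 ^ b') * (2 * pkMass n b') * (epk b' τ (x - z) * G z ^ q) := by
            refine lintegral_mono fun z => ?_
            rw [← mul_assoc]
            gcongr
            exact lintegral_epk_mul_epk_le hs hsτ hb'n x z
        _ ≤ _ := by
            have := pkMass_ne_top hb'n
            rw [lintegral_const_mul' _ _ (by finiteness), mul_assoc _ (pkMaxConst n b')]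
            gcongr
            exact lintegral_epk_mul_le hτ hb'n (hG.pow_const q) x
    · exact ((measurable_epk.comp (by fun_prop)).mul hjm).aemeasurable
  calc _ ≤ ∫⁻ u, (vn⁻¹) ^ κ * (vn⁻¹ * ENNReal.ofReal (2 ^ b')) * M ^ κ *
      (epk b' s (x - u) * J u) := lintegral_mono hpoint
    _ = (vn⁻¹) ^ κ * (vn⁻¹ * ENNReal.ofReal (2 ^ b')) * M ^ κ * ∫⁻ u, epk b' s (x - u) * J u := by
      rw [lintegral_const_mul]
      exact (measurable_epk.comp (by fun_prop)).mul hJm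
    _ ≤ (vn⁻¹) ^ κ * (vn⁻¹ * ENNReal.ofReal (2 ^ b')) * M ^ κ *
        (ENNReal.ofReal (2 ^ b') * (2 * pkMass n b') * pkMaxConst n b' * M) := by gcongr
    _ = (vn⁻¹) ^ κ * (vn⁻¹ * ENNReal.ofReal (2 ^ b')) *
        (ENNReal.ofReal (2 ^ b') * (2 * pkMass n b') * pkMaxConst n b') * (M ^ κ * M) := by ring
    _ = _ := by
      have : M ^ κ * M = M ^ (1 / q) := by
        conv_lhs => rw [← ENNReal.rpow_one M, ← ENNReal.rpow_mul, one_mul,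
          ← ENNReal.rpow_add_of_nonneg _ _ hκ0 zero_le_one]
        congr 1
        rw [hκ]; field_simp; ring
      rw [this]

/-! ### `A₁` weights and weak-type bounds -/

theorem isClosed_cube {n : ℕ} (x : Euc n) (r : ℝ) : IsClosed (cube x r) := by
  have : cube x r = ⋂ i, {y : Euc n | |y i - x i| ≤ r / 2} := by ext; simp [cube]
  rw [this]
  exact isClosed_iInter fun i => isClosed_le (by fun_prop) continuous_const

theorem closedBall_subset_cube {n : ℕ} (x : Euc n) (ρ : ℝ) :
    Metric.closedBall x ρ ⊆ cube x (2 * ρ) := by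
  intro y hy i
  rw [Metric.mem_closedBall, dist_eq_norm] at hy
  have := PiLp.norm_apply_le (y - x) i
  rw [Real.norm_eq_abs, PiLp.sub_apply] at this
  linarith

theorem isCompact_cube {n : ℕ} (x : Euc n) (r : ℝ) : IsCompact (cube x r) := by
  refine Metric.isCompact_of_isClosed_isBounded (isClosed_cube x r) ?_
  refine (Metric.isBounded_closedBall (x := x) (r := n * (r / 2))).subset fun y hy => ?_
  rw [Metric.mem_closedBall, dist_eq_norm]
  have h1 : ‖y - x‖ ≤ ∑ i, ‖(y - x) i‖ := by
    conv_lhs => rw [← (EuclideanSpace.basisFun (Fin n) ℝ).sum_repr (y - x)]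
    refine (norm_sum_le _ _).trans (le_of_eq ?_)
    refine Finset.sum_congr rfl fun i _ => ?_
    rw [norm_smul]
    simp
  refine h1.trans ?_
  have := Finset.sum_le_card_nsmul Finset.univ (fun i => ‖(y - x) i‖) (r / 2) fun i _ => by
    simpa using hy i
  simpa using this

theorem IsA1.aemeasurable {n : ℕ} {w : Euc n → ℝ} (hw : IsA1 w) :
    AEMeasurable (fun x => ENNReal.ofReal (w x)) volume :=
  hw.2.1.aestronglyMeasurable.aemeasurable.ennreal_ofReal

theorem IsA1.lintegral_cube {n : ℕ} {w : Euc n → ℝ} (hw : IsA1 w) (x : Euc n) (r : ℝ) :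
    ∫⁻ y in cube x r, ENNReal.ofReal (w y) = ENNReal.ofReal (∫ y in cube x r, w y) := by
  rw [← ofReal_integral_eq_lintegral_ofReal]
  · exact hw.2.1.integrableOn_isCompact (isCompact_cube x r)
  · exact Filter.Eventually.of_forall hw.1

theorem ae_essInf_cube_le {n : ℕ} {w : Euc n → ℝ} (hw : ∀ x, 0 ≤ w x) (x : Euc n) (r : ℝ) :
    ∀ᵐ y ∂(volume.restrict (cube x r)), essInf w (volume.restrict (cube x r)) ≤ w y :=
  ae_essInf_le (Filter.isBoundedUnder_of ⟨0, fun y => hw y⟩)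

/-- The `A₁` condition in terms of concentric balls. -/
theorem IsA1.exists_ball {n : ℕ} {w : Euc n → ℝ} (hw : IsA1 w) :
    ∃ A : ℝ, 0 < A ∧ ∀ (x : Euc n) (ρ : ℝ), 0 < ρ → ∀ᵐ y, y ∈ Metric.closedBall x ρ →
      wMeasure w (Metric.closedBall x (5 * ρ)) ≤
        ENNReal.ofReal A * ENNReal.ofReal (ρ ^ n) * ENNReal.ofReal (w y) := by
  obtain ⟨C, hC, h⟩ := hw.2.2
  refine ⟨C * 10 ^ n, by positivity, fun x ρ hρ => ?_⟩
  have h1 := h x (2 * (5 * ρ)) (by positivity)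
  rw [div_le_iff₀ (by positivity)] at h1
  filter_upwards [ae_imp_of_ae_restrict (ae_essInf_cube_le hw.1 x (2 * (5 * ρ)))] with y hy hyB
  have hyc : y ∈ cube x (2 * (5 * ρ)) :=
    closedBall_subset_cube x _ (Metric.closedBall_subset_closedBall (by linarith) hyB)
  calc _ ≤ wMeasure w (cube x (2 * (5 * ρ))) := measure_mono (closedBall_subset_cube x _)
    _ = ENNReal.ofReal (∫ y in cube x (2 * (5 * ρ)), w y) := by
        rw [wMeasure, withDensity_apply _ (isClosed_cube x _).measurableSet, hw.lintegral_cube]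
    _ ≤ ENNReal.ofReal (C * 10 ^ n * ρ ^ n * w y) := by
        refine ENNReal.ofReal_le_ofReal (h1.trans ?_)
        calc _ = C * (10 ^ n * ρ ^ n) * essInf w (volume.restrict (cube x (2 * (5 * ρ)))) := by
              rw [← mul_pow]; ring
          _ ≤ C * (10 ^ n * ρ ^ n) * w y := by gcongr; exact hy hyc
          _ = _ := by ring
    _ = _ := by rw [ENNReal.ofReal_mul (by positivity), ENNReal.ofReal_mul (by positivity)]

theorem setLIntegral_wMeasure {n : ℕ} {w : Euc n → ℝ} (hw : IsA1 w) {h : Euc n → ℝ≥0∞}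
    (hh : Measurable h) {s : Set (Euc n)} (hs : MeasurableSet s) :
    ∫⁻ y in s, h y ∂(wMeasure w) = ∫⁻ y in s, ENNReal.ofReal (w y) * h y := by
  rw [wMeasure, restrict_withDensity hs, lintegral_withDensity_eq_lintegral_mul₀]
  · rfl
  · exact hw.aemeasurable.restrict
  · exact hh.aemeasurable

/-- Weak type `(1,1)` of the maximal function with respect to an `A₁` weight. -/
theorem IsA1.weak_type {n : ℕ} {w : Euc n → ℝ} (hw : IsA1 w) :
    ∃ A : ℝ≥0∞, A ≠ ⊤ ∧ ∀ h : Euc n → ℝ≥0∞, Measurable h → ∀ Λ : ℝ≥0∞,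
      Λ * wMeasure w {x | Λ < bMax h x} ≤ A * ∫⁻ y, h y ∂(wMeasure w) := by
  obtain ⟨A, hA, hball⟩ := hw.exists_ball
  refine ⟨ENNReal.ofReal A, ENNReal.ofReal_ne_top, fun h hh Λ => ?_⟩
  have hone : ∀ (x : Euc n) (ρ : ℝ), 0 < ρ →
      Λ < ENNReal.ofReal ((ρ ^ n)⁻¹) * ∫⁻ y in Metric.closedBall x ρ, h y →
      Λ * wMeasure w (Metric.closedBall x (5 * ρ)) ≤
        ENNReal.ofReal A * ∫⁻ y in Metric.closedBall x ρ, h y ∂(wMeasure w) := by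
    intro x ρ hρ hlt
    set m5 := wMeasure w (Metric.closedBall x (5 * ρ))
    have h2 : (∫⁻ y in Metric.closedBall x ρ, h y) * m5 ≤ ENNReal.ofReal A * ENNReal.ofReal (ρ ^ n) *
        ∫⁻ y in Metric.closedBall x ρ, h y ∂(wMeasure w) := by
      rw [← lintegral_mul_const _ hh, setLIntegral_wMeasure hw hh measurableSet_closedBall,
        ← lintegral_const_mul' _ _ (by finiteness)]
      refine lintegral_mono_ae ?_
      rw [ae_restrict_iff' measurableSet_closedBall]
      filter_upwards [hball x ρ hρ] with y hy hyB
      rw [mul_comm (h y), ← mul_assoc]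
      gcongr
      exact hy hyB
    calc Λ * m5 ≤ ENNReal.ofReal ((ρ ^ n)⁻¹) * (∫⁻ y in Metric.closedBall x ρ, h y) * m5 := by
          gcongr
      _ ≤ ENNReal.ofReal ((ρ ^ n)⁻¹) * (ENNReal.ofReal A * ENNReal.ofReal (ρ ^ n) *
          ∫⁻ y in Metric.closedBall x ρ, h y ∂(wMeasure w)) := by rw [mul_assoc]; gcongr
      _ = (ENNReal.ofReal ((ρ ^ n)⁻¹) * ENNReal.ofReal (ρ ^ n)) * (ENNReal.ofReal A *
          ∫⁻ y in Metric.closedBall x ρ, h y ∂(wMeasure w)) := by ring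
      _ = _ := by
          rw [← ENNReal.ofReal_mul (by positivity), inv_mul_cancel₀ (by positivity),
            ENNReal.ofReal_one, one_mul]
  set T : ℕ → Set (Euc n) := fun k => {x | ∃ ρ : ℝ, 0 < ρ ∧ ρ ≤ k ∧
    Λ < ENNReal.ofReal ((ρ ^ n)⁻¹) * ∫⁻ y in Metric.closedBall x ρ, h y} with hT
  have hTm : Monotone T := fun i j hij x ⟨ρ, h1, h2, h3⟩ =>
    ⟨ρ, h1, h2.trans (by exact_mod_cast hij), h3⟩
  have hTu : {x | Λ < bMax h x} ⊆ ⋃ k, T k := by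
    intro x hx
    simp only [bMax, Set.mem_ofPred_eq, lt_iSup_iff] at hx
    obtain ⟨ρ, hρ, hlt⟩ := hx
    obtain ⟨k, hk⟩ := exists_nat_ge ρ
    exact mem_iUnion.2 ⟨k, ρ, hρ, hk, hlt⟩
  refine (mul_le_mul_right (measure_mono hTu) _).trans ?_
  rw [hTm.measure_iUnion, ENNReal.mul_iSup]
  refine iSup_le fun k => ?_
  choose! r hr0 hrk hr using fun x (hx : x ∈ T k) => hx
  obtain ⟨u, huT, hud, hucov⟩ := Vitali.exists_disjoint_subfamily_covering_enlargement_closedBall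
    (T k) id r k hrk 5 (by norm_num)
  have hud' : u.PairwiseDisjoint fun a => Metric.closedBall a (r a) := hud
  have huc : u.Countable := hud.countable_of_nonempty_interior fun x hx =>
    ⟨x, Metric.ball_subset_interior_closedBall (Metric.mem_ball_self (hr0 x (huT hx)))⟩
  have hcov : T k ⊆ ⋃ x ∈ u, Metric.closedBall x (5 * r x) := by
    intro x hx
    obtain ⟨y, hy, hsub⟩ := hucov x hx
    exact mem_biUnion hy (hsub (Metric.mem_closedBall_self (hr0 x hx).le))
  calc Λ * wMeasure w (T k) ≤ Λ * ∑' x : u, wMeasure w (Metric.closedBall (x : Euc n) (5 * r x)) := by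
        gcongr
        exact (measure_mono hcov).trans (measure_biUnion_le _ huc _)
    _ ≤ ∑' x : u, ENNReal.ofReal A *
        ∫⁻ y in Metric.closedBall (x : Euc n) (r x), h y ∂(wMeasure w) := by
        rw [← ENNReal.tsum_mul_left]
        exact ENNReal.tsum_le_tsum fun x => hone x _ (hr0 x (huT x.2)) (hr x (huT x.2))
    _ = ENNReal.ofReal A *
        ∫⁻ y in ⋃ x ∈ u, Metric.closedBall (x : Euc n) (r x), h y ∂(wMeasure w) := by
        rw [ENNReal.tsum_mul_left, lintegral_biUnion huc (fun _ _ => measurableSet_closedBall) hud']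
    _ ≤ _ := by exact mul_le_mul_right (setLIntegral_le_lintegral _ _) _

theorem weakNorm_measure_le {n : ℕ} {μ : Measure (Euc n)} {p : ℝ} (hp : 0 < p)
    (G : Euc n → ℝ≥0∞) {s : ℝ} (hs : 0 < s) :
    μ {x | ENNReal.ofReal s < G x} ≤ ENNReal.ofReal (s ^ (-p)) * weakNorm μ p G ^ p := by
  have h : ENNReal.ofReal s * μ {x | ENNReal.ofReal s < G x} ^ (1 / p) ≤ weakNorm μ p G :=
    le_iSup₂_of_le (s.toNNReal) (by simpa using hs) le_rfl
  have h2 : μ {x | ENNReal.ofReal s < G x} ^ (1 / p) ≤ ENNReal.ofReal s⁻¹ * weakNorm μ p G := by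
    calc _ = ENNReal.ofReal s⁻¹ * (ENNReal.ofReal s * μ {x | ENNReal.ofReal s < G x} ^ (1 / p)) := by
          rw [← mul_assoc, ← ENNReal.ofReal_mul (by positivity), inv_mul_cancel₀ hs.ne',
            ENNReal.ofReal_one, one_mul]
      _ ≤ _ := by gcongr
  have h3 := ENNReal.rpow_le_rpow h2 hp.le
  rw [← ENNReal.rpow_mul, one_div_mul_cancel hp.ne', ENNReal.rpow_one,
    ENNReal.mul_rpow_of_nonneg _ _ hp.le, ENNReal.ofReal_rpow_of_pos (by positivity),
    Real.inv_rpow hs.le, ← Real.rpow_neg hs.le] at h3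
  exact h3

/-- Dyadic layer-cake estimate for the part of `G ^ q` above height `s`. -/
theorem rpow_indicator_le_tsum {n : ℕ} {q : ℝ} (hq : 0 < q) (G : Euc n → ℝ≥0∞) {s : ℝ}
    (hs : 0 < s) (x : Euc n) :
    {x | ENNReal.ofReal s ≤ G x}.indicator (fun x => G x ^ q) x ≤
      ∑' k : ℕ, {x | ENNReal.ofReal (2 ^ k * (s / 2)) < G x}.indicator
        (fun _ => ENNReal.ofReal ((2 ^ (k + 1) * s) ^ q)) x := by
  by_cases hx : x ∈ {x | ENNReal.ofReal s ≤ G x}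
  swap
  · simp [indicator_of_notMem hx]
  rw [indicator_of_mem hx]
  rw [Set.mem_ofPred_eq] at hx
  rcases eq_or_ne (G x) ⊤ with h | h
  · -- all the terms contribute at least `s ^ q`
    have : ∑' _ : ℕ, ENNReal.ofReal (s ^ q) ≤ ∑' k : ℕ,
        {x | ENNReal.ofReal (2 ^ k * (s / 2)) < G x}.indicator
        (fun _ => ENNReal.ofReal ((2 ^ (k + 1) * s) ^ q)) x := by
      refine ENNReal.tsum_le_tsum fun k => ?_
      have hmem : x ∈ {x | ENNReal.ofReal (2 ^ k * (s / 2)) < G x} := by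
        rw [Set.mem_ofPred_eq, h]
        exact ENNReal.ofReal_lt_top
      rw [indicator_of_mem hmem]
      refine ENNReal.ofReal_le_ofReal (Real.rpow_le_rpow hs.le ?_ hq.le)
      exact le_mul_of_one_le_left hs.le (one_le_pow₀ one_le_two)
    rw [ENNReal.tsum_const_eq_top_of_ne_zero (by simp; positivity)] at this
    rw [top_le_iff.1 this]; exact le_top
  · set g := (G x).toReal with hg
    have hGg : G x = ENNReal.ofReal g := (ENNReal.ofReal_toReal h).symm
    have hsg : s ≤ g := by rwa [hGg, ENNReal.ofReal_le_ofReal_iff ENNReal.toReal_nonneg] at hx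
    obtain ⟨k, hk1, hk2⟩ := exists_nat_pow_near ((one_le_div hs).2 hsg) one_lt_two
    rw [le_div_iff₀ hs] at hk1
    rw [div_lt_iff₀ hs] at hk2
    refine le_trans ?_ (ENNReal.le_tsum k)
    have hpos : 0 < 2 ^ k * s := by positivity
    have hmem : x ∈ {x | ENNReal.ofReal (2 ^ k * (s / 2)) < G x} := by
      rw [Set.mem_ofPred_eq, hGg, ENNReal.ofReal_lt_ofReal_iff (by linarith)]
      linarith
    rw [indicator_of_mem hmem, hGg, ENNReal.ofReal_rpow_of_nonneg (by linarith) hq.le]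
    refine ENNReal.ofReal_le_ofReal (Real.rpow_le_rpow (by linarith) hk2.le hq.le)

/-- The integral of `G ^ q` above height `s`, for `G` in weak `L^p` with `p > q`. -/
theorem exists_lintegral_rpow_le {n : ℕ} {p q : ℝ} (hq : 0 < q) (hqp : q < p) :
    ∃ C : ℝ≥0∞, C ≠ ⊤ ∧ ∀ (μ : Measure (Euc n)) (G : Euc n → ℝ≥0∞), Measurable G →
      ∀ s : ℝ, 0 < s → ∫⁻ x, {x | ENNReal.ofReal s ≤ G x}.indicator (fun x => G x ^ q) x ∂μ ≤
        C * ENNReal.ofReal (s ^ (q - p)) * weakNorm μ p G ^ p := by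
  have hp : 0 < p := hq.trans hqp
  have hs : Summable fun k : ℕ => (2 : ℝ) ^ (q + p) * (2 ^ (q - p)) ^ k :=
    (summable_geometric_of_lt_one (by positivity)
      (Real.rpow_lt_one_of_one_lt_of_neg one_lt_two (by linarith))).mul_left _
  refine ⟨∑' k : ℕ, ENNReal.ofReal (2 ^ (q + p) * (2 ^ (q - p)) ^ k), ?_, ?_⟩
  · rw [← ENNReal.ofReal_tsum_of_nonneg (fun k => by positivity) hs]
    exact ENNReal.ofReal_ne_top
  intro μ G hG s hs0
  refine (lintegral_mono (rpow_indicator_le_tsum hq G hs0)).trans ?_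
  have hms (k : ℕ) : MeasurableSet {x | ENNReal.ofReal (2 ^ k * (s / 2)) < G x} :=
    measurableSet_lt measurable_const hG
  rw [lintegral_tsum fun k => (measurable_const.indicator (hms k)).aemeasurable, mul_assoc,
    ← ENNReal.tsum_mul_right]
  refine ENNReal.tsum_le_tsum fun k => ?_
  rw [lintegral_indicator (hms k), setLIntegral_const]
  refine (mul_le_mul_right (weakNorm_measure_le hp G (s := 2 ^ k * (s / 2)) (by positivity)) _).trans ?_
  rw [← mul_assoc, ← mul_assoc, ← ENNReal.ofReal_mul (by positivity),
    ← ENNReal.ofReal_mul (by positivity)]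
  refine mul_le_mul_left (ENNReal.ofReal_le_ofReal (le_of_eq ?_)) _
  have e1 : (2 : ℝ) ^ (k + 1) * s = 2 ^ ((k : ℝ) + 1) * s := by
    rw [Real.rpow_add two_pos, Real.rpow_natCast, Real.rpow_one, pow_succ]
  have e2 : (2 : ℝ) ^ k * (s / 2) = 2 ^ ((k : ℝ) - 1) * s := by
    rw [Real.rpow_sub two_pos, Real.rpow_natCast, Real.rpow_one]; ring
  rw [e1, e2, Real.mul_rpow (by positivity) hs0.le, Real.mul_rpow (by positivity) hs0.le,
    ← Real.rpow_mul two_pos.le, ← Real.rpow_mul two_pos.le, ← Real.rpow_natCast (2 ^ (q - p)) k,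
    ← Real.rpow_mul two_pos.le]
  calc _ = (2 ^ (((k : ℝ) + 1) * q) * 2 ^ (((k : ℝ) - 1) * -p)) * (s ^ q * s ^ (-p)) := by ring
    _ = _ := by
      rw [← Real.rpow_add two_pos, ← Real.rpow_add hs0, ← Real.rpow_add two_pos]
      ring_nf

theorem bMax_le_add {n : ℕ} (g h : Euc n → ℝ≥0∞) (hg : Measurable g) (c : ℝ≥0∞)
    (hle : ∀ y, h y ≤ g y + c) (x : Euc n) :
    bMax h x ≤ bMax g x + c * volume (Metric.ball (0 : Euc n) 1) := by
  refine iSup₂_le fun ρ hρ => ?_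
  calc _ ≤ ENNReal.ofReal ((ρ ^ n)⁻¹) * ∫⁻ y in Metric.closedBall x ρ, (g y + c) := by
        gcongr with y
        exact hle y
    _ = ENNReal.ofReal ((ρ ^ n)⁻¹) * (∫⁻ y in Metric.closedBall x ρ, g y) +
        (ENNReal.ofReal ((ρ ^ n)⁻¹) * ENNReal.ofReal (ρ ^ n)) *
          (c * volume (Metric.ball (0 : Euc n) 1)) := by
        rw [lintegral_add_left hg, setLIntegral_const, Measure.addHaar_closedBall _ _ hρ.le,
          finrank_euclideanSpace, Fintype.card_fin]
        ring
    _ ≤ _ := by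
        rw [← ENNReal.ofReal_mul (by positivity), inv_mul_cancel₀ (by positivity),
          ENNReal.ofReal_one, one_mul]
        gcongr
        exact le_iSup₂_of_le ρ hρ le_rfl

/-- The operator `G ↦ M(G ^ q) ^ (1 / q)` is bounded on weighted weak `L^p` for `q < p`. -/
theorem IsA1.exists_weakNorm_bMax_le {n : ℕ} {w : Euc n → ℝ} (hw : IsA1 w) {p q : ℝ} (hq : 0 < q)
    (hqp : q < p) :
    ∃ C : ℝ≥0∞, C ≠ ⊤ ∧ ∀ G : Euc n → ℝ≥0∞, Measurable G →
      weakNorm (wMeasure w) p (fun x => bMax (fun z => G z ^ q) x ^ (1 / q)) ≤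
        C * weakNorm (wMeasure w) p G := by
  have hp : 0 < p := hq.trans hqp
  obtain ⟨A, hA, hweak⟩ := hw.weak_type
  obtain ⟨B, hB, hlayer⟩ := exists_lintegral_rpow_le (n := n) hq hqp
  set vn := (volume (Metric.ball (0 : Euc n) 1)).toReal with hvn
  have hvn0 : 0 < vn := ENNReal.toReal_pos (Metric.measure_ball_pos volume _ one_pos).ne'
    measure_ball_lt_top.ne
  set ε := (2 * vn) ^ (-1 / q) with hε
  have hε0 : 0 < ε := by positivity
  have hεq : ε ^ q * vn = 1 / 2 := by
    rw [hε, ← Real.rpow_mul (by positivity), div_mul_cancel₀ _ hq.ne', Real.rpow_neg_one]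
    field_simp
  refine ⟨(2 * A * B * ENNReal.ofReal (ε ^ (q - p))) ^ (1 / p),
    (ENNReal.rpow_lt_top_of_nonneg (by positivity) (by finiteness)).ne, fun G hG => ?_⟩
  refine iSup₂_le fun lam hlam => ?_
  obtain ⟨l, hl⟩ : ∃ l : ℝ, l = NNReal.toReal lam := ⟨_, rfl⟩
  have hl0 : 0 < l := by rw [hl]; exact_mod_cast hlam
  have hlc : (lam : ℝ≥0∞) = ENNReal.ofReal l := by simp [hl]
  set W := weakNorm (wMeasure w) p G
  set s := ε * l with hs
  have hs0 : 0 < s := by positivity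
  set g := {x | ENNReal.ofReal s ≤ G x}.indicator (fun x => G x ^ q) with hg
  have hgm : Measurable g := (hG.pow_const q).indicator (measurableSet_le measurable_const hG)
  have hle : ∀ y, G y ^ q ≤ g y + ENNReal.ofReal (s ^ q) := by
    intro y
    by_cases hy : y ∈ {x | ENNReal.ofReal s ≤ G x}
    · rw [hg, indicator_of_mem hy]; exact le_self_add
    · rw [Set.mem_ofPred_eq, not_le] at hy
      refine le_trans ?_ le_add_self
      rw [← ENNReal.ofReal_rpow_of_nonneg hs0.le hq.le]
      gcongr
  set Λ := ENNReal.ofReal (l ^ q / 2) with hΛ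
  have hsub : {x | (lam : ℝ≥0∞) < bMax (fun z => G z ^ q) x ^ (1 / q)} ⊆ {x | Λ < bMax g x} := by
    intro x hx
    rw [Set.mem_ofPred_eq] at hx ⊢
    have h1 : ENNReal.ofReal (l ^ q) < bMax (fun z => G z ^ q) x := by
      rw [← ENNReal.ofReal_rpow_of_pos hl0, ← hlc]
      rw [← ENNReal.rpow_lt_rpow_iff hq, ← ENNReal.rpow_mul] at hx
      rwa [one_div_mul_cancel hq.ne', ENNReal.rpow_one] at hx
    have h2 := h1.trans_le (bMax_le_add g (fun z => G z ^ q) hgm _ hle x)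
    have h3 : ENNReal.ofReal (s ^ q) * volume (Metric.ball (0 : Euc n) 1) = Λ := by
      rw [← ENNReal.ofReal_toReal (measure_ball_lt_top (μ := volume)).ne, ← hvn,
        ← ENNReal.ofReal_mul (by positivity), hΛ, hs, Real.mul_rpow hε0.le hl0.le]
      congr 1
      linear_combination l ^ q * hεq
    rw [h3] at h2
    by_contra! hcon
    have h4 : bMax g x + Λ ≤ ENNReal.ofReal (l ^ q) := by
      calc _ ≤ Λ + Λ := by gcongr
        _ = _ := by rw [hΛ, ← ENNReal.ofReal_add (by positivity) (by positivity)]; ring_nf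
    exact absurd h2 (not_lt.2 h4)
  have h5 : wMeasure w {x | (lam : ℝ≥0∞) < bMax (fun z => G z ^ q) x ^ (1 / q)} ≤
      2 * A * B * ENNReal.ofReal (ε ^ (q - p)) * (ENNReal.ofReal (l ^ (-p)) * W ^ p) := by
    have h6 := (mul_le_mul_right (measure_mono (μ := wMeasure w) hsub) Λ).trans
      ((hweak g hgm Λ).trans (mul_le_mul_right (hlayer (wMeasure w) G hG s hs0) A))
    have h7 : ENNReal.ofReal (2 * l ^ (-q)) * Λ = 1 := by
      rw [hΛ, ← ENNReal.ofReal_mul (by positivity), Real.rpow_neg hl0.le]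
      rw [show 2 * (l ^ q)⁻¹ * (l ^ q / 2) = 1 by field_simp, ENNReal.ofReal_one]
    calc _ = ENNReal.ofReal (2 * l ^ (-q)) * Λ *
          wMeasure w {x | (lam : ℝ≥0∞) < bMax (fun z => G z ^ q) x ^ (1 / q)} := by
          rw [h7, one_mul]
      _ ≤ ENNReal.ofReal (2 * l ^ (-q)) * (A * (B * ENNReal.ofReal (s ^ (q - p)) * W ^ p)) := by
          rw [mul_assoc]; gcongr
      _ = A * B * W ^ p * (ENNReal.ofReal (2 * l ^ (-q)) * ENNReal.ofReal (s ^ (q - p))) := by ring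
      _ = A * B * W ^ p * (2 * (ENNReal.ofReal (ε ^ (q - p)) * ENNReal.ofReal (l ^ (-p)))) := by
          rw [← ENNReal.ofReal_mul (by positivity), ← ENNReal.ofReal_mul (by positivity),
            show (2 : ℝ≥0∞) = ENNReal.ofReal 2 by simp, ← ENNReal.ofReal_mul (by positivity),
            hs, Real.mul_rpow hε0.le hl0.le]
          congr 2
          have : l ^ (-p) = l ^ (-q) * l ^ (q - p) := by rw [← Real.rpow_add hl0]; ring_nf
          rw [this]; ring
      _ = _ := by ring
  have h8 := ENNReal.rpow_le_rpow h5 (show 0 ≤ 1 / p by positivity)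
  rw [ENNReal.mul_rpow_of_nonneg _ _ (by positivity), ENNReal.mul_rpow_of_nonneg _ (W ^ p)
    (by positivity), ← ENNReal.rpow_mul, mul_one_div_cancel hp.ne', ENNReal.rpow_one,
    ENNReal.ofReal_rpow_of_pos (by positivity), ← Real.rpow_mul hl0.le,
    show -p * (1 / p) = -1 by field_simp, Real.rpow_neg_one] at h8
  refine (mul_le_mul_right h8 _).trans (le_of_eq ?_)
  have h9 : (lam : ℝ≥0∞) * ENNReal.ofReal l⁻¹ = 1 := by
    rw [hlc, ← ENNReal.ofReal_mul hl0.le, mul_inv_cancel₀ hl0.ne', ENNReal.ofReal_one]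
  calc _ = ((lam : ℝ≥0∞) * ENNReal.ofReal l⁻¹) *
        ((2 * A * B * ENNReal.ofReal (ε ^ (q - p))) ^ (1 / p) * W) := by ring
    _ = _ := by rw [h9, one_mul]

theorem weakNorm_const_mul_le {n : ℕ} (μ : Measure (Euc n)) {p : ℝ} {c : ℝ≥0} (hc : 0 < c)
    (g : Euc n → ℝ≥0∞) : weakNorm μ p (fun x => c * g x) ≤ c * weakNorm μ p g := by
  refine iSup₂_le fun lam hlam => ?_
  have h : ((lam / c : ℝ≥0) : ℝ≥0∞) * μ {x | ((lam / c : ℝ≥0) : ℝ≥0∞) < g x} ^ (1 / p) ≤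
      weakNorm μ p g := le_iSup₂_of_le (lam / c) (by positivity) le_rfl
  have hset : {x | (lam : ℝ≥0∞) < c * g x} = {x | ((lam / c : ℝ≥0) : ℝ≥0∞) < g x} := by
    ext x
    simp only [Set.mem_ofPred_eq]
    rw [ENNReal.coe_div hc.ne', ENNReal.div_lt_iff (by simp [hc.ne']) (by simp), mul_comm]
  rw [hset]
  calc _ = c * (((lam / c : ℝ≥0) : ℝ≥0∞) * μ {x | ((lam / c : ℝ≥0) : ℝ≥0∞) < g x} ^ (1 / p)) := by
        rw [← mul_assoc, ← ENNReal.coe_mul, mul_div_cancel₀ _ hc.ne']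
    _ ≤ _ := by gcongr

theorem weakNorm_mono {n : ℕ} (μ : Measure (Euc n)) {p : ℝ} (hp : 0 < p) {g h : Euc n → ℝ≥0∞}
    (hgh : ∀ x, g x ≤ h x) : weakNorm μ p g ≤ weakNorm μ p h := by
  refine iSup₂_mono fun lam hlam => ?_
  gcongr with x
  exact hgh x

/-! ### Convolution with continuous kernels of polynomial decay -/

/-- `k` is continuous and `O((1 + |x|)^(-b))`. -/
def HasDecay {n : ℕ} (b : ℝ) (k : Euc n → ℂ) : Prop :=
  Continuous k ∧ ∃ C : ℝ, 0 ≤ C ∧ ∀ x, ‖k x‖ ≤ C * (1 + ‖x‖) ^ (-b)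

theorem one_add_norm_rpow_le {n : ℕ} {b : ℝ} (hb : 0 ≤ b) (x y : Euc n) :
    (1 + ‖x - y‖) ^ (-b) ≤ (1 + ‖x‖) ^ b * (1 + ‖y‖) ^ (-b) := by
  have h1 : 1 + ‖y‖ ≤ (1 + ‖x‖) * (1 + ‖x - y‖) := by
    have : ‖y‖ ≤ ‖x‖ + ‖x - y‖ := by
      calc ‖y‖ = ‖x - (x - y)‖ := by rw [sub_sub_cancel]
        _ ≤ _ := norm_sub_le _ _
    nlinarith [norm_nonneg x, norm_nonneg (x - y)]
  have h2 := Real.rpow_le_rpow (by positivity) h1 hb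
  rw [Real.mul_rpow (by positivity) (by positivity)] at h2
  rw [Real.rpow_neg (by positivity), Real.rpow_neg (by positivity), ← div_eq_mul_inv,
    inv_eq_one_div, div_le_div_iff₀ (by positivity) (by positivity)]
  linarith

theorem continuous_dil {n : ℕ} {k : Euc n → ℂ} (hk : Continuous k) (t : ℝ) :
    Continuous (dil k t) := by
  unfold dil; fun_prop

theorem norm_dil_le {n : ℕ} {b C t : ℝ} {k : Euc n → ℂ} (hk : ∀ x, ‖k x‖ ≤ C * (1 + ‖x‖) ^ (-b))
    (ht : 0 < t) (x : Euc n) : ‖dil k t x‖ ≤ C * pk b t x := by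
  unfold dil pk
  rw [norm_smul, Real.norm_of_nonneg (by positivity)]
  have := hk (t⁻¹ • x)
  rw [norm_smul, norm_inv, Real.norm_of_nonneg ht.le, ← div_eq_inv_mul] at this
  calc _ ≤ (t ^ n)⁻¹ * (C * (1 + ‖x‖ / t) ^ (-b)) := by gcongr
    _ = _ := by ring

theorem enorm_dil_le {n : ℕ} {b C t : ℝ} {k : Euc n → ℂ} (hC : 0 ≤ C)
    (hk : ∀ x, ‖k x‖ ≤ C * (1 + ‖x‖) ^ (-b))
    (ht : 0 < t) (x : Euc n) : ‖dil k t x‖ₑ ≤ ENNReal.ofReal C * epk b t x := by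
  rw [epk, ← ENNReal.ofReal_mul hC, ← ofReal_norm]
  exact ENNReal.ofReal_le_ofReal (norm_dil_le hk ht x)

theorem HasDecay.dil {n : ℕ} {b t : ℝ} {k : Euc n → ℂ} (hb : 0 ≤ b) (hk : HasDecay b k)
    (ht : 0 < t) : HasDecay b (dil k t) := by
  obtain ⟨hc, C, hC, h⟩ := hk
  refine ⟨continuous_dil hc t, C * ((t ^ n)⁻¹ * (min 1 t⁻¹) ^ (-b)), by positivity, fun x => ?_⟩
  refine (norm_dil_le h ht x).trans ?_
  rw [mul_assoc, pk, mul_assoc]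
  have hm : 0 < min 1 t⁻¹ := by positivity
  rw [← Real.mul_rpow hm.le (by positivity)]
  have h1 : min 1 t⁻¹ * (1 + ‖x‖) ≤ 1 + ‖x‖ / t := by
    have e1 : min 1 t⁻¹ ≤ 1 := min_le_left _ _
    have e2 : min 1 t⁻¹ * ‖x‖ ≤ t⁻¹ * ‖x‖ := by gcongr; exact min_le_right _ _
    rw [div_eq_inv_mul]; linarith
  refine mul_le_mul_of_nonneg_left (mul_le_mul_of_nonneg_left ?_ (by positivity)) hC
  exact Real.rpow_le_rpow_of_nonpos (by positivity) h1 (by linarith)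

theorem SchwartzMap.hasDecay {n : ℕ} (φ : SchwartzMap (Euc n) ℂ) (b : ℝ) : HasDecay b φ := by
  obtain ⟨k, hk⟩ := exists_nat_ge b
  have key := fun x =>
    SchwartzMap.one_add_le_sup_seminorm_apply (𝕜 := ℝ) (m := (k, 0)) le_rfl le_rfl φ x
  simp only [norm_iteratedFDeriv_zero] at key
  obtain ⟨S, hS⟩ : ∃ S : ℝ, ∀ x, (1 + ‖x‖) ^ k * ‖φ x‖ ≤ S := ⟨_, key⟩
  refine ⟨φ.continuous, S, le_trans (by positivity) (hS 0), fun x => ?_⟩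
  have h2 : (1 + ‖x‖) ^ b * ‖φ x‖ ≤ (1 + ‖x‖) ^ k * ‖φ x‖ := by
    rw [← Real.rpow_natCast]
    gcongr
    linarith [norm_nonneg x]
  rw [Real.rpow_neg (by positivity), ← div_eq_mul_inv, le_div_iff₀ (by positivity), mul_comm]
  exact h2.trans (hS x)

theorem IsGood.integrable_rpow {n : ℕ} {b : ℝ} {f : Euc n → ℂ} (hf : IsGood b f) :
    Integrable fun y => (1 + ‖y‖) ^ (-b) * ‖f y‖ := by
  refine ⟨((continuous_const.add continuous_norm).rpow_const fun y =>
    Or.inl (by positivity : (0 : ℝ) < 1 + ‖y‖).ne').aestronglyMeasurable.mul hf.1.norm, ?_⟩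
  rw [HasFiniteIntegral]
  refine lt_of_le_of_lt (lintegral_mono fun y => le_of_eq ?_) hf.2.lt_top
  rw [enorm_mul, enorm_norm, Real.enorm_of_nonneg (by positivity)]

theorem HasDecay.norm_mul_le {n : ℕ} {b C : ℝ} {k f : Euc n → ℂ} (hb : 0 ≤ b) (hC : 0 ≤ C)
    (hk : ∀ x, ‖k x‖ ≤ C * (1 + ‖x‖) ^ (-b)) (x y : Euc n) :
    ‖k (x - y) * f y‖ ≤ C * (1 + ‖x‖) ^ b * ((1 + ‖y‖) ^ (-b) * ‖f y‖) := by
  rw [norm_mul, ← mul_assoc]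
  refine mul_le_mul_of_nonneg_right ?_ (norm_nonneg _)
  rw [mul_assoc]
  exact (hk _).trans (mul_le_mul_of_nonneg_left (one_add_norm_rpow_le hb x y) hC)

theorem HasDecay.integrable_conv {n : ℕ} {b : ℝ} {k f : Euc n → ℂ} (hb : 0 ≤ b)
    (hk : HasDecay b k) (hf : IsGood b f) (x : Euc n) : Integrable fun y => k (x - y) * f y := by
  obtain ⟨hc, C, hC, h⟩ := hk
  refine (hf.integrable_rpow.const_mul (C * (1 + ‖x‖) ^ b)).mono'
    ((hc.comp (continuous_const.sub continuous_id)).aestronglyMeasurable.mul hf.1)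
    (Filter.Eventually.of_forall fun y => ?_)
  exact HasDecay.norm_mul_le hb hC h x y

theorem HasDecay.continuous_conv {n : ℕ} {b : ℝ} {k f : Euc n → ℂ} (hb : 0 ≤ b)
    (hk : HasDecay b k) (hf : IsGood b f) : Continuous fun x => ∫ y, k (x - y) * f y := by
  obtain ⟨hc, C, hC, h⟩ := hk
  refine continuous_iff_continuousAt.2 fun x₀ => ?_
  refine continuousAt_of_dominated (bound := fun y =>
    C * (2 + ‖x₀‖) ^ b * ((1 + ‖y‖) ^ (-b) * ‖f y‖)) ?_ ?_ (hf.integrable_rpow.const_mul _) ?_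
  · exact Filter.Eventually.of_forall fun x =>
      (hc.comp (continuous_const.sub continuous_id)).aestronglyMeasurable.mul hf.1
  · filter_upwards [Metric.ball_mem_nhds x₀ one_pos] with x hx
    refine Filter.Eventually.of_forall fun y => (HasDecay.norm_mul_le hb hC h x y).trans ?_
    rw [Metric.mem_ball, dist_eq_norm] at hx
    have : ‖x‖ ≤ ‖x - x₀‖ + ‖x₀‖ := by simpa using norm_add_le (x - x₀) x₀
    have h1 : 1 + ‖x‖ ≤ 2 + ‖x₀‖ := by linarith
    exact mul_le_mul_of_nonneg_right (mul_le_mul_of_nonneg_left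
      (Real.rpow_le_rpow (by positivity) h1 hb) hC) (by positivity)
  · refine Filter.Eventually.of_forall fun y => ?_
    exact ((hc.comp (continuous_id.sub continuous_const)).mul continuous_const).continuousAt

/-- Fubini for iterated convolutions of two kernels of decay `b > n` with a good function. -/
theorem conv_conv {n : ℕ} {b : ℝ} (hb : n < b) {k l f : Euc n → ℂ} (hk : HasDecay b k)
    (hl : HasDecay b l) (hf : IsGood b f) (x : Euc n) :
    ∫ y, k (x - y) * ∫ z, l (y - z) * f z = ∫ z, (∫ y, k (x - y) * l (y - z)) * f z := by
  have hb0 : 0 ≤ b := (Nat.cast_nonneg n).trans hb.le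
  obtain ⟨hkc, C, hC, hkb⟩ := hk
  obtain ⟨hlc, D, hD, hlb⟩ := hl
  have hKint : Integrable (Function.uncurry fun y z => k (x - y) * (l (y - z) * f z))
      ((volume : Measure (Euc n)).prod volume) := by
    have hm : AEStronglyMeasurable (Function.uncurry fun y z => k (x - y) * (l (y - z) * f z))
        ((volume : Measure (Euc n)).prod volume) := by
      refine AEStronglyMeasurable.mul (Continuous.aestronglyMeasurable (by fun_prop))
        (AEStronglyMeasurable.mul (Continuous.aestronglyMeasurable (by fun_prop)) hf.1.comp_snd)
    refine ⟨hm, ?_⟩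
    rw [HasFiniteIntegral, lintegral_prod_symm _ hm.enorm]
    have e1 : ∀ v : Euc n, ‖k v‖ₑ ≤ ENNReal.ofReal C * epk b 1 v := fun v => by
      rw [epk, ← ENNReal.ofReal_mul hC, ← ofReal_norm]
      exact ENNReal.ofReal_le_ofReal (by simpa [pk] using hkb v)
    have e2 : ∀ v : Euc n, ‖l v‖ₑ ≤ ENNReal.ofReal D * epk b 1 v := fun v => by
      rw [epk, ← ENNReal.ofReal_mul hD, ← ofReal_norm]
      exact ENNReal.ofReal_le_ofReal (by simpa [pk] using hlb v)
    have e3 : ∀ z : Euc n, epk b 1 (x - z) ≤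
        ENNReal.ofReal ((1 + ‖x‖) ^ b) * ENNReal.ofReal ((1 + ‖z‖) ^ (-b)) := fun z => by
      rw [epk, ← ENNReal.ofReal_mul (by positivity)]
      exact ENNReal.ofReal_le_ofReal (by simpa [pk] using one_add_norm_rpow_le hb0 x z)
    set A := ENNReal.ofReal (2 ^ b) * (2 * pkMass n b)
    have hA : A ≠ ⊤ := by have := pkMass_ne_top hb; finiteness
    set B := ENNReal.ofReal C * ENNReal.ofReal D * A * ENNReal.ofReal ((1 + ‖x‖) ^ b)
    calc _ ≤ ∫⁻ z, B * (ENNReal.ofReal ((1 + ‖z‖) ^ (-b)) * ‖f z‖ₑ) := by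
          refine lintegral_mono fun z => ?_
          calc _ ≤ ∫⁻ y, (ENNReal.ofReal C * ENNReal.ofReal D * ‖f z‖ₑ) *
                (epk b 1 (x - y) * epk b 1 (y - z)) := by
                refine lintegral_mono fun y => ?_
                simp only [Function.uncurry_apply_pair, enorm_mul]
                calc _ ≤ ENNReal.ofReal C * epk b 1 (x - y) *
                      (ENNReal.ofReal D * epk b 1 (y - z) * ‖f z‖ₑ) :=
                      mul_le_mul' (e1 _) (mul_le_mul' (e2 _) le_rfl)
                  _ = _ := by ring
            _ = (ENNReal.ofReal C * ENNReal.ofReal D * ‖f z‖ₑ) *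
                ∫⁻ y, epk b 1 (x - y) * epk b 1 (y - z) := by
                rw [lintegral_const_mul' _ _ (by finiteness)]
            _ ≤ (ENNReal.ofReal C * ENNReal.ofReal D * ‖f z‖ₑ) * (A *
                (ENNReal.ofReal ((1 + ‖x‖) ^ b) * ENNReal.ofReal ((1 + ‖z‖) ^ (-b)))) := by
                refine mul_le_mul_right ?_ _
                exact (lintegral_epk_mul_epk_le one_pos le_rfl hb x z).trans
                  (mul_le_mul_right (e3 z) _)
            _ = _ := by ring
      _ = B * ∫⁻ z, ENNReal.ofReal ((1 + ‖z‖) ^ (-b)) * ‖f z‖ₑ :=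
          lintegral_const_mul' _ _ (by finiteness)
      _ < ⊤ := ENNReal.mul_lt_top (by finiteness) hf.2.lt_top
  calc _ = ∫ y, ∫ z, k (x - y) * (l (y - z) * f z) := by simp_rw [integral_const_mul]
    _ = ∫ z, ∫ y, k (x - y) * (l (y - z) * f z) := integral_integral_swap hKint
    _ = _ := by simp_rw [← mul_assoc, integral_mul_const]

theorem conv_comm {n : ℕ} (k l : Euc n → ℂ) (x z : Euc n) :
    ∫ y, k (x - y) * l (y - z) = ∫ y, l (x - y) * k (y - z) := by
  rw [← integral_sub_left_eq_self _ volume (x + z)]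
  refine integral_congr_ae (Filter.Eventually.of_forall fun y => ?_)
  simp only
  rw [show x - (x + z - y) = y - z by abel, show x + z - y - z = x - y by abel, mul_comm]

theorem conv_left_comm {n : ℕ} {b : ℝ} (hb : n < b) {k l f : Euc n → ℂ} (hk : HasDecay b k)
    (hl : HasDecay b l) (hf : IsGood b f) (x : Euc n) :
    ∫ y, k (x - y) * ∫ z, l (y - z) * f z = ∫ y, l (x - y) * ∫ z, k (y - z) * f z := by
  rw [conv_conv hb hk hl hf, conv_conv hb hl hk hf]
  simp_rw [conv_comm k l]

/-! ### The test class and the grand maximal function -/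

/-- A relation preserved by all partial derivatives is preserved by `D^α`. -/
theorem mderiv_rel {n : ℕ} (P : (Euc n → ℂ) → (Euc n → ℂ) → Prop)
    (hP : ∀ i f g, P f g → P (pderiv' i f) (pderiv' i g)) (α : Fin n → ℕ) {f g : Euc n → ℂ}
    (h : P f g) : P (mderiv α f) (mderiv α g) := by
  unfold mderiv
  induction List.finRange n with
  | nil => exact h
  | cons i l ih =>
    simp only [List.map_cons, List.foldr_cons, Function.comp_apply]
    generalize (List.foldr (fun x1 x2 => x1 ∘ x2) id (List.map (fun i => (pderiv' i)^[α i]) l)) f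
      = F at ih
    generalize (List.foldr (fun x1 x2 => x1 ∘ x2) id (List.map (fun i => (pderiv' i)^[α i]) l)) g
      = G at ih
    induction α i with
    | zero => exact ih
    | succ k ihk =>
      rw [Function.iterate_succ_apply', Function.iterate_succ_apply']
      exact hP i _ _ ihk

theorem mderiv_zero {n : ℕ} (f : Euc n → ℂ) : mderiv 0 f = f := by
  unfold mderiv
  induction List.finRange n with
  | nil => rfl
  | cons i l ih => simpa using ih

theorem mderiv_smul_comp_sub {n : ℕ} (α : Fin n → ℕ) (f : Euc n → ℂ) (c : ℝ) (h : Euc n) :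
    mderiv α (fun x => c • f (x - h)) = fun x => c • mderiv α f (x - h) := by
  refine mderiv_rel (fun f g => g = fun x => c • f (x - h)) ?_ α rfl
  rintro i f g rfl
  funext x
  unfold pderiv'
  have h1 : fderiv ℝ (fun x => c • f (x - h)) x = c • fderiv ℝ f (x - h) := by
    rw [← fderiv_comp_sub]
    exact congrFun (fderiv_const_smul_field (𝕜 := ℝ) c) x
  rw [h1]
  rfl

theorem exists_mderiv_schwartz {n : ℕ} (α : Fin n → ℕ) (φ : SchwartzMap (Euc n) ℂ) :
    ∃ ψ : SchwartzMap (Euc n) ℂ, mderiv α φ = ψ := by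
  refine mderiv_rel (fun f _ => ∃ ψ : SchwartzMap (Euc n) ℂ, f = ψ) ?_ α (g := φ) ⟨φ, rfl⟩
  rintro i f - ⟨ψ, rfl⟩
  exact ⟨LineDeriv.lineDerivOp (EuclideanSpace.single i (1 : ℝ)) ψ, rfl⟩

/-- A positive multiple of any Schwartz function lies in the test class. -/
theorem exists_smul_inTestClass {n : ℕ} (N : ℕ) (φ : SchwartzMap (Euc n) ℂ) :
    ∃ c : ℝ, 0 < c ∧ inTestClass N (c • φ) := by
  have hbd : ∀ α : Fin n → ℕ, ∃ B : ℝ, ∀ x, (1 + ‖x‖) ^ (N + n + 1) * ‖mderiv α φ x‖ ≤ B := by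
    intro α
    obtain ⟨ψ, hψ⟩ := exists_mderiv_schwartz α φ
    rw [hψ]
    obtain ⟨-, C, -, hC⟩ := ψ.hasDecay (N + n + 1 : ℕ)
    refine ⟨C, fun x => ?_⟩
    have := hC x
    rw [Real.rpow_neg (by positivity), Real.rpow_natCast, ← div_eq_mul_inv,
      le_div_iff₀ (by positivity)] at this
    linarith
  choose B hB using hbd
  have hB0 : ∀ α, 0 ≤ B α := fun α => le_trans (by positivity) (hB α 0)
  have hfin : {α : Fin n → ℕ | ∑ i, α i ≤ N + 1}.Finite := by
    refine (Set.finite_Iic (fun _ : Fin n => N + 1)).subset fun α hα i => ?_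
    exact (Finset.single_le_sum (f := α) (fun _ _ => Nat.zero_le _) (Finset.mem_univ i)).trans hα
  set S := ∑ α ∈ hfin.toFinset, B α with hS
  have hS0 : 0 ≤ S := Finset.sum_nonneg fun α _ => hB0 α
  refine ⟨(1 + S)⁻¹, by positivity, fun x α hα => ?_⟩
  have hle : B α ≤ S := Finset.single_le_sum (f := B) (fun α _ => hB0 α) (by simpa using hα)
  have e := mderiv_smul_comp_sub α φ (1 + S)⁻¹ 0
  simp only [sub_zero] at e
  have e2 : mderiv α (⇑((1 + S)⁻¹ • φ)) x = (1 + S)⁻¹ • mderiv α φ x := congrFun e x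
  rw [e2, norm_smul, Real.norm_of_nonneg (by positivity)]
  have := hB α x
  rw [mul_left_comm, ← div_eq_inv_mul, div_le_one (by positivity)]
  linarith

/-- The test class is stable, up to a constant, under translations by vectors of length `≤ 1`. -/
theorem inTestClass.translate {n N : ℕ} {φ : SchwartzMap (Euc n) ℂ} (hφ : inTestClass N φ)
    {h : Euc n} (hh : ‖h‖ ≤ 1) :
    inTestClass N (((2 : ℝ) ^ (N + n + 1))⁻¹ • φ.compSubConstCLM ℝ h) := by
  intro x α hα
  set c := ((2 : ℝ) ^ (N + n + 1))⁻¹ with hc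
  have e2 : mderiv α (⇑(c • φ.compSubConstCLM ℝ h)) x = c • mderiv α φ (x - h) :=
    congrFun (mderiv_smul_comp_sub α φ c h) x
  rw [e2, norm_smul, Real.norm_of_nonneg (by positivity)]
  have h1 : 1 + ‖x‖ ≤ 2 * (1 + ‖x - h‖) := by
    have : ‖x‖ ≤ ‖x - h‖ + ‖h‖ := by simpa using norm_add_le (x - h) h
    linarith [norm_nonneg (x - h)]
  calc _ ≤ (2 * (1 + ‖x - h‖)) ^ (N + n + 1) * (c * ‖mderiv α φ (x - h)‖) := by gcongr
    _ = (1 + ‖x - h‖) ^ (N + n + 1) * ‖mderiv α φ (x - h)‖ := by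
      rw [mul_pow, hc]; field_simp
    _ ≤ 1 := hφ _ _ hα

theorem inTestClass.norm_le {n N : ℕ} {φ : SchwartzMap (Euc n) ℂ} (hφ : inTestClass N φ)
    (x : Euc n) : ‖φ x‖ ≤ 1 * (1 + ‖x‖) ^ (-((N + n + 1 : ℕ) : ℝ)) := by
  have := hφ x 0 (by simp)
  rw [mderiv_zero] at this
  rw [Real.rpow_neg (by positivity), Real.rpow_natCast, ← div_eq_mul_inv,
    le_div_iff₀ (by positivity)]
  linarith

theorem le_grandMax {n N : ℕ} {φ : SchwartzMap (Euc n) ℂ} (hφ : inTestClass N φ) {t : ℝ}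
    (ht : 0 < t) (f : Euc n → ℂ) (x : Euc n) : ‖∫ y, dil φ t (x - y) * f y‖ₑ ≤ grandMax N f x :=
  le_iSup₂_of_le φ hφ (le_iSup₂_of_le t ht le_rfl)

/-- The grand maximal function controls the non-tangential averages `φ_t * f`. -/
theorem enorm_conv_le_grandMax {n N : ℕ} {φ : SchwartzMap (Euc n) ℂ} {c : ℝ} (hc : 0 < c)
    (hφ : inTestClass N (c • φ)) {t : ℝ} (ht : 0 < t) (f : Euc n → ℂ) {u z : Euc n}
    (huz : ‖z - u‖ ≤ t) : ‖∫ y, dil φ t (u - y) * f y‖ₑ ≤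
      ENNReal.ofReal (2 ^ (N + n + 1) / c) * grandMax N f z := by
  set h := t⁻¹ • (z - u) with hh
  have hh1 : ‖h‖ ≤ 1 := by
    rw [hh, norm_smul, norm_inv, Real.norm_of_nonneg ht.le, ← div_eq_inv_mul, div_le_one ht]
    exact huz
  set ψ := ((2 : ℝ) ^ (N + n + 1))⁻¹ • (c • φ).compSubConstCLM ℝ h with hψ
  have key : ∀ y, dil φ t (u - y) * f y = (2 ^ (N + n + 1) / c : ℝ) • (dil ψ t (z - y) * f y) := by
    intro y
    have e : dil ψ t (z - y) = (c / 2 ^ (N + n + 1) : ℝ) • dil φ t (u - y) := by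
      have e1 : t⁻¹ • (z - y) - h = t⁻¹ • (u - y) := by rw [hh, ← smul_sub]; congr 1; abel
      have e2 : ψ (t⁻¹ • (z - y)) = ((2 : ℝ) ^ (N + n + 1))⁻¹ • c • φ (t⁻¹ • (u - y)) := by
        rw [← e1]; rfl
      unfold dil
      rw [e2, smul_smul, smul_smul, smul_smul]
      congr 1
      ring
    rw [e, smul_mul_assoc, smul_smul]
    rw [show (2 : ℝ) ^ (N + n + 1) / c * (c / 2 ^ (N + n + 1)) = 1 by field_simp, one_smul]
  simp_rw [key]
  rw [integral_smul, enorm_smul, Real.enorm_of_nonneg (by positivity)]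
  exact mul_le_mul_right (le_grandMax (hφ.translate hh1) ht f z) _

theorem measurable_grandMax {n N : ℕ} {b : ℝ} (hb : 0 ≤ b) {f : Euc n → ℂ} (hf : IsGood b f) :
    Measurable (grandMax N f) := by
  refine LowerSemicontinuous.measurable ?_
  unfold grandMax
  refine lowerSemicontinuous_iSup fun φ => lowerSemicontinuous_iSup fun _ =>
    lowerSemicontinuous_iSup fun t => lowerSemicontinuous_iSup fun ht =>
    Continuous.lowerSemicontinuous ?_
  exact (((φ.hasDecay b).dil hb ht).continuous_conv hb hf).enorm

/-! ### The reproducing formula for the Bochner-Riesz kernel -/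

theorem integrable_multiplier {n : ℕ} {δ : ℝ} (hδ : 0 < δ) :
    Integrable fun ξ : Euc n => Complex.ofReal (((1 - ‖ξ‖ ^ 2) ⊔ 0) ^ δ) := by
  refine Continuous.integrable_of_hasCompactSupport ?_ ?_
  · exact Complex.continuous_ofReal.comp
      (Continuous.rpow_const (by fun_prop) fun ξ => Or.inr hδ.le)
  · refine HasCompactSupport.of_support_subset_isCompact (isCompact_closedBall (0 : Euc n) 1) ?_
    intro ξ hξ
    rw [mem_closedBall_zero_iff]
    by_contra! hcon
    refine hξ ?_
    have : 1 - ‖ξ‖ ^ 2 ≤ 0 := by nlinarith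
    simp [max_eq_right this, Real.zero_rpow (by positivity)]

/-- There is a Schwartz function `η` whose Fourier transform is `1` on the unit ball; hence
`K * η = K` for the Bochner-Riesz kernel `K`. -/
theorem exists_brKernel_conv_eq (n : ℕ) {δ : ℝ} (hδ : 0 < δ) :
    ∃ η : SchwartzMap (Euc n) ℂ, ∀ x, ∫ y, brKernel n δ (x - y) * η y = brKernel n δ x := by
  let χ₀ : ContDiffBump (0 : Euc n) := ⟨1, 2, one_pos, one_lt_two⟩
  have hχs : HasCompactSupport fun x => Complex.ofReal (χ₀ x) :=
    χ₀.hasCompactSupport.comp_left Complex.ofReal_zero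
  let χ : SchwartzMap (Euc n) ℂ := hχs.toSchwartzMap (Complex.ofRealCLM.contDiff.comp χ₀.contDiff)
  have hχ1 : ∀ ξ : Euc n, ‖ξ‖ ≤ 1 → χ ξ = 1 := by
    intro ξ hξ
    have : χ₀ ξ = 1 := χ₀.one_of_mem_closedBall (by simpa using hξ)
    change Complex.ofReal (χ₀ ξ) = 1
    rw [this, Complex.ofReal_one]
  refine ⟨𝓕⁻ χ, fun x => ?_⟩
  have hη : 𝓕 (⇑(𝓕⁻ χ : SchwartzMap (Euc n) ℂ)) = χ := by
    rw [← SchwartzMap.fourier_coe, FourierTransform.fourier_fourierInv_eq]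
  set η : SchwartzMap (Euc n) ℂ := 𝓕⁻ χ
  set m : Euc n → ℂ := fun ξ => Complex.ofReal (((1 - ‖ξ‖ ^ 2) ⊔ 0) ^ δ) with hm
  set g : Euc n → ℂ := fun ξ => 𝐞 (inner ℝ ξ x) • m ξ with hg
  have hgi : Integrable g := by
    refine ((integrable_multiplier hδ).norm).mono' ?_ (Filter.Eventually.of_forall fun ξ => ?_)
    · have hc : Continuous fun ξ : Euc n => 𝐞 (inner ℝ ξ x) :=
        Real.continuous_fourierChar.comp (continuous_id.inner continuous_const)
      exact hc.aestronglyMeasurable.smul (integrable_multiplier hδ).aestronglyMeasurable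
    · rw [hg, Circle.norm_smul]
  have e1 : ∀ y, 𝓕 g y = brKernel n δ (x - y) := by
    intro y
    rw [brKernel, Real.fourier_eq, Real.fourierInv_eq]
    refine integral_congr_ae (Filter.Eventually.of_forall fun ξ => ?_)
    simp only [hg]
    rw [smul_smul, ← AddChar.map_add_eq_mul, inner_sub_right]
    ring_nf
    rfl
  have e2 : ∫ y, 𝓕 g y • η y = ∫ ξ, g ξ • 𝓕 (⇑η) ξ := by
    simpa using! VectorFourier.integral_fourierIntegral_smul_eq_flip (L := innerₗ (Euc n))
      Real.continuous_fourierChar continuous_inner hgi η.integrable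
  simp_rw [e1, smul_eq_mul] at e2
  rw [e2, hη, brKernel, Real.fourierInv_eq]
  refine integral_congr_ae (Filter.Eventually.of_forall fun ξ => ?_)
  simp only [hg]
  by_cases hξ : ‖ξ‖ ≤ 1
  · rw [hχ1 ξ hξ, mul_one]
  · have h0 : m ξ = 0 := by
      have : 1 - ‖ξ‖ ^ 2 ≤ 0 := by nlinarith [not_le.1 hξ]
      simp [hm, max_eq_right this, Real.zero_rpow hδ.ne']
    change 𝐞 (inner ℝ ξ x) • m ξ * χ ξ = 𝐞 (inner ℝ ξ x) • m ξ
    rw [h0, smul_zero, zero_mul]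

theorem conv_dil {n : ℕ} (k l : Euc n → ℂ) {t : ℝ} (ht : 0 < t) (x z : Euc n) :
    ∫ y, dil k t (x - y) * dil l t (y - z) =
      dil (fun v => ∫ y, k (v - y) * l y) t (x - z) := by
  rw [← integral_add_right_eq_self _ z]
  simp only [add_sub_cancel_right]
  have := Measure.integral_comp_inv_smul (volume : Measure (Euc n))
    (fun y => k (t⁻¹ • (x - z) - y) * l y) t
  rw [finrank_euclideanSpace, Fintype.card_fin, abs_of_pos (by positivity)] at this
  have e : ∀ y, dil k t (x - (y + z)) * dil l t y = ((t ^ n)⁻¹ * (t ^ n)⁻¹ : ℝ) •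
      (k (t⁻¹ • (x - z) - t⁻¹ • y) * l (t⁻¹ • y)) := by
    intro y
    unfold dil
    rw [smul_mul_smul_comm, ← smul_sub]
    congr 4
    abel
  simp_rw [e]
  rw [integral_smul, this, smul_smul, dil]
  congr 1
  field_simp

/-! ### The pointwise estimate -/

theorem one_add_norm_rpow_anti {n : ℕ} {b a : ℝ} (hba : b ≤ a) (x : Euc n) :
    (1 + ‖x‖) ^ (-a) ≤ (1 + ‖x‖) ^ (-b) :=
  Real.rpow_le_rpow_of_exponent_le (by linarith [norm_nonneg x]) (by linarith)

/-- `K_τ * f = K_τ * (η_τ * f)` whenever `K * η = K`. -/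
theorem brOp_eq_conv {m : ℕ} {δ R : ℝ} (hδ : 0 < δ) (hR : 0 < R)
    (hn : ((m + 1 : ℕ) : ℝ) < δ + m / 2 + 1) {η : SchwartzMap (Euc (m + 1)) ℂ}
    (hη : ∀ x, ∫ y, brKernel (m + 1) δ (x - y) * η y = brKernel (m + 1) δ x)
    {f : Euc (m + 1) → ℂ} (hf : IsGood (δ + m / 2 + 1) f) (x : Euc (m + 1)) :
    brOp (m + 1) δ R f x =
      ∫ y, dil (brKernel (m + 1) δ) R⁻¹ (x - y) * ∫ z, dil η R⁻¹ (y - z) * f z := by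
  have hb0 : (0 : ℝ) ≤ δ + m / 2 + 1 := by positivity
  have hK : HasDecay (δ + m / 2 + 1) (brKernel (m + 1) δ) := by
    obtain ⟨C, hC, h⟩ := exists_brKernel_le (m := m) hδ
    exact ⟨continuous_brKernel hδ, C, hC.le, h⟩
  have hτ : 0 < R⁻¹ := inv_pos.2 hR
  rw [conv_conv hn (hK.dil hb0 hτ) ((η.hasDecay _).dil hb0 hτ) hf]
  simp_rw [conv_dil _ _ hτ, hη]
  rfl

/-- The grand maximal function of `T_R f` is dominated by the `L^q`-maximal function of the
grand maximal function of `f`, uniformly in `R`. -/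
theorem exists_grandMax_brOp_le {m N : ℕ} {δ b q : ℝ} (hδ : 0 < δ) (hq0 : 0 < q) (hq1 : q < 1)
    (hb : ((m + 1 : ℕ) : ℝ) / q < b) (hba : b ≤ δ + m / 2 + 1)
    (hbN : b ≤ ((N + (m + 1) + 1 : ℕ) : ℝ)) :
    ∃ C : ℝ≥0∞, C ≠ ⊤ ∧ ∃ B : ℝ, 0 < B ∧ ∀ R : ℝ, 0 < R → ∀ f : Euc (m + 1) → ℂ,
      IsGood (δ + m / 2 + 1) f → ∀ x, grandMax N (brOp (m + 1) δ R f) x ≤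
        C * bMax (fun z => (ENNReal.ofReal B * grandMax N f z) ^ q) x ^ (1 / q) := by
  have hnb : ((m + 1 : ℕ) : ℝ) < b := by
    refine lt_of_le_of_lt ?_ hb
    rw [le_div_iff₀ hq0]
    exact mul_le_of_le_one_right (by positivity) hq1.le
  have hna := hnb.trans_le hba
  have ha0 : (0 : ℝ) ≤ δ + m / 2 + 1 := by positivity
  obtain ⟨C₀, hC₀, hmain⟩ := exists_lintegral_epk_mul_le hq0 hq1 hb
  obtain ⟨CK, hCK, hKa⟩ := exists_brKernel_le (m := m) hδ
  have hKb : ∀ x, ‖brKernel (m + 1) δ x‖ ≤ CK * (1 + ‖x‖) ^ (-b) := fun x =>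
    (hKa x).trans (mul_le_mul_of_nonneg_left (one_add_norm_rpow_anti hba x) hCK.le)
  have hK : HasDecay (δ + m / 2 + 1) (brKernel (m + 1) δ) :=
    ⟨continuous_brKernel hδ, CK, hCK.le, hKa⟩
  obtain ⟨η, hη⟩ := exists_brKernel_conv_eq (m + 1) hδ
  obtain ⟨c, hc, hηc⟩ := exists_smul_inTestClass N η
  set A := ENNReal.ofReal (2 ^ b) * (2 * pkMass (m + 1) b) with hA
  have hAt : A ≠ ⊤ := by have := pkMass_ne_top hnb; finiteness
  set P : ℝ := 2 ^ (N + (m + 1) + 1) with hP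
  have hP0 : 0 < P := by positivity
  refine ⟨ENNReal.ofReal CK * (1 + A) * C₀, by finiteness, P / 1 + P / c, by positivity,
    fun R hR f hf x => ?_⟩
  set G : Euc (m + 1) → ℝ≥0∞ := fun z => ENNReal.ofReal (P / 1 + P / c) * grandMax N f z with hG
  have hGm : Measurable G := (measurable_grandMax ha0 hf).const_mul _
  set τ := R⁻¹ with hτd
  have hτ : 0 < τ := inv_pos.2 hR
  set X := bMax (fun z => G z ^ q) x ^ (1 / q)
  refine iSup₂_le fun φ hφ => iSup₂_le fun t ht => ?_
  change ‖∫ y, dil φ t (x - y) * brOp (m + 1) δ R f y‖ₑ ≤ _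
  have hφb : ∀ v, ‖φ v‖ ≤ 1 * (1 + ‖v‖) ^ (-b) := fun v =>
    (hφ.norm_le v).trans (mul_le_mul_of_nonneg_left (one_add_norm_rpow_anti hbN v) zero_le_one)
  rcases le_or_gt τ t with htτ | htτ
  · -- at scales above `1 / R` the averages `φ_t * f` are taken first
    have e : ∫ y, dil φ t (x - y) * brOp (m + 1) δ R f y =
        ∫ y, dil (brKernel (m + 1) δ) τ (x - y) * ∫ z, dil φ t (y - z) * f z :=
      conv_left_comm hna ((φ.hasDecay _).dil ha0 ht) (hK.dil ha0 hτ) hf x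
    have hF : ∀ u z, ‖z - u‖ ≤ t → ‖∫ y, dil φ t (u - y) * f y‖ₑ ≤ G z := by
      intro u z huz
      refine (enorm_conv_le_grandMax one_pos (by rwa [one_smul]) ht f huz).trans ?_
      refine mul_le_mul_left (ENNReal.ofReal_le_ofReal ?_) _
      have : 0 < P / c := by positivity
      linarith
    rw [e]
    calc _ ≤ ∫⁻ y, ‖dil (brKernel (m + 1) δ) τ (x - y) * ∫ z, dil φ t (y - z) * f z‖ₑ :=
          enorm_integral_le_lintegral_enorm _
      _ ≤ ∫⁻ y, ENNReal.ofReal CK *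
          (epk b τ (x - y) * ‖∫ z, dil φ t (y - z) * f z‖ₑ) := by
          refine lintegral_mono fun y => ?_
          rw [enorm_mul, ← mul_assoc]
          exact mul_le_mul_left (enorm_dil_le hCK.le hKb hτ _) _
      _ = ENNReal.ofReal CK * ∫⁻ y, epk b τ (x - y) * ‖∫ z, dil φ t (y - z) * f z‖ₑ :=
          lintegral_const_mul' _ _ ENNReal.ofReal_ne_top
      _ ≤ ENNReal.ofReal CK * (C₀ * X) := mul_le_mul_right (hmain τ t hτ htτ _ G hGm hF x) _
      _ = ENNReal.ofReal CK * 1 * C₀ * X := by ring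
      _ ≤ _ := by gcongr; exact le_self_add
  · -- at scales below `1 / R` the kernel `φ_t * K_τ` is absorbed by the majorant at scale `τ`
    set F : Euc (m + 1) → ℝ≥0∞ := fun u => ‖∫ y, dil η τ (u - y) * f y‖ₑ with hFd
    have hFm : Measurable F :=
      (((η.hasDecay _).dil ha0 hτ).continuous_conv ha0 hf).enorm.measurable
    have hF : ∀ u z, ‖z - u‖ ≤ τ → F u ≤ G z := by
      intro u z huz
      refine (enorm_conv_le_grandMax hc hηc hτ f huz).trans ?_
      refine mul_le_mul_left (ENNReal.ofReal_le_ofReal ?_) _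
      linarith
    have hT : ∀ y, ‖brOp (m + 1) δ R f y‖ₑ ≤ ∫⁻ u, ENNReal.ofReal CK * (epk b τ (y - u) * F u) := by
      intro y
      rw [brOp_eq_conv hδ hR hna hη hf]
      refine (enorm_integral_le_lintegral_enorm _).trans (lintegral_mono fun u => ?_)
      rw [enorm_mul, ← mul_assoc]
      exact mul_le_mul_left (enorm_dil_le hCK.le hKb hτ _) _
    calc _ ≤ ∫⁻ y, ‖dil φ t (x - y) * brOp (m + 1) δ R f y‖ₑ :=
          enorm_integral_le_lintegral_enorm _
      _ ≤ ∫⁻ y, ∫⁻ u, ENNReal.ofReal CK * (epk b t (x - y) * epk b τ (y - u) * F u) := by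
          refine lintegral_mono fun y => ?_
          rw [enorm_mul]
          calc _ ≤ epk b t (x - y) * ∫⁻ u, ENNReal.ofReal CK * (epk b τ (y - u) * F u) := by
                refine mul_le_mul' ?_ (hT y)
                simpa using enorm_dil_le zero_le_one hφb ht (x - y)
            _ = _ := by
                rw [← lintegral_const_mul' _ _ (epk_ne_top _)]
                refine lintegral_congr fun u => ?_
                ring
      _ = ∫⁻ u, ∫⁻ y, ENNReal.ofReal CK * (epk b t (x - y) * epk b τ (y - u) * F u) := by
          refine lintegral_lintegral_swap (Measurable.aemeasurable ?_)
          have h1 : Measurable fun p : Euc (m + 1) × Euc (m + 1) => epk b t (x - p.1) :=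
            measurable_epk.comp (by fun_prop)
          have h2 : Measurable fun p : Euc (m + 1) × Euc (m + 1) => epk b τ (p.1 - p.2) :=
            measurable_epk.comp (by fun_prop)
          exact ((h1.mul h2).mul (hFm.comp measurable_snd)).const_mul _
      _ ≤ ∫⁻ u, ENNReal.ofReal CK * A * (epk b τ (x - u) * F u) := by
          refine lintegral_mono fun u => ?_
          have hm : Measurable fun y => epk b t (x - y) * epk b τ (y - u) :=
            (measurable_epk_sub x).mul (measurable_epk.comp (by fun_prop))
          rw [lintegral_const_mul' _ _ ENNReal.ofReal_ne_top, lintegral_mul_const _ hm]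
          calc _ ≤ ENNReal.ofReal CK * (A * epk b τ (x - u) * F u) :=
                mul_le_mul_right (mul_le_mul_left
                  (lintegral_epk_mul_epk_le ht htτ.le hnb x u) _) _
            _ = _ := by ring
      _ = ENNReal.ofReal CK * A * ∫⁻ u, epk b τ (x - u) * F u :=
          lintegral_const_mul' _ _ (by finiteness)
      _ ≤ ENNReal.ofReal CK * A * (C₀ * X) :=
          mul_le_mul_right (hmain τ τ hτ le_rfl F G hGm hF x) _
      _ = ENNReal.ofReal CK * A * C₀ * X := by ring
      _ ≤ _ := by gcongr; exact le_add_self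

/-! ### The critical index of an `A₁` weight -/

theorem volume_real_cube {n : ℕ} (x : Euc n) {r : ℝ} (hr : 0 < r) :
    volume.real (cube x r) = r ^ n := by
  have e : cube x r = WithLp.ofLp ⁻¹' Icc (fun i => x i - r / 2) (fun i => x i + r / 2) := by
    ext y
    simp only [cube, Set.mem_ofPred_eq, abs_le, mem_preimage, mem_Icc, Pi.le_def, ← forall_and]
    refine forall_congr' fun i => ?_
    constructor <;> rintro ⟨h1, h2⟩ <;> constructor <;> linarith
  rw [Measure.real, e, (PiLp.volume_preserving_ofLp (Fin n)).measure_preimage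
    measurableSet_Icc.nullMeasurableSet, Real.volume_Icc_pi_toReal fun i => by simp only; linarith]
  simp

theorem IsA1.isAq_two {n : ℕ} {w : Euc n → ℝ} (hw : IsA1 w) : IsAq w 2 := by
  obtain ⟨C, hC, h⟩ := hw.2.2
  refine ⟨hw.1, hw.2.1, C, hC, fun x r hr => ?_⟩
  have h1 := h x r hr
  set c := essInf w (volume.restrict (cube x r)) with hc
  set I := (∫ y in cube x r, w y) / r ^ n with hI
  have hI0 : 0 ≤ I := div_nonneg (integral_nonneg hw.1) (by positivity)
  have e : ((∫ y in cube x r, w y ^ (-1 / ((2 : ℝ) - 1))) / r ^ n) ^ ((2 : ℝ) - 1) =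
      (∫ y in cube x r, (w y)⁻¹) / r ^ n := by
    rw [show (2 : ℝ) - 1 = 1 by norm_num, Real.rpow_one]
    simp_rw [show (-1 : ℝ) / 1 = -1 by norm_num, Real.rpow_neg_one]
  rw [e]
  rcases le_or_gt c 0 with hc0 | hc0
  · have : I = 0 := le_antisymm (h1.trans (mul_nonpos_of_nonneg_of_nonpos hC.le hc0)) hI0
    rw [this, zero_mul]; exact hC.le
  · have hvol : volume.real (cube x r) ≤ r ^ n := (volume_real_cube x hr).le
    have h2 : ∫ y in cube x r, (w y)⁻¹ ≤ c⁻¹ * r ^ n := by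
      calc _ ≤ ∫ _ in cube x r, c⁻¹ := by
            refine integral_mono_of_nonneg
              (Filter.Eventually.of_forall fun y => inv_nonneg.2 (hw.1 y)) ?_ ?_
            · exact integrableOn_const (isCompact_cube x r).measure_lt_top.ne
            · filter_upwards [ae_essInf_cube_le hw.1 x r] with y hy
              exact inv_anti₀ hc0 hy
        _ ≤ _ := by
            rw [setIntegral_const, smul_eq_mul, mul_comm]
            gcongr
    have h3 : (∫ y in cube x r, (w y)⁻¹) / r ^ n ≤ c⁻¹ := by
      rw [div_le_iff₀ (by positivity)]; exact h2
    calc _ ≤ C * c * c⁻¹ := by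
          gcongr
          exact div_nonneg (integral_nonneg fun y => inv_nonneg.2 (hw.1 y)) (by positivity)
      _ = C := by field_simp

theorem IsA1.one_le_criticalIndex {n : ℕ} {w : Euc n → ℝ} (hw : IsA1 w) : 1 ≤ criticalIndex w :=
  le_csInf ⟨2, one_lt_two, hw.isAq_two⟩ fun _ hq => hq.1.le

/-! ### Degenerate cases -/

theorem grandMax_eq_zero {n N : ℕ} {f : Euc n → ℂ} (hf : ∀ᵐ x, f x = 0) (x : Euc n) :
    grandMax N f x = 0 := by
  simp only [grandMax, ENNReal.iSup_eq_zero]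
  intro φ _ t _
  have : ∫ y, dil φ t (x - y) * f y = 0 := by
    refine integral_eq_zero_of_ae ?_
    filter_upwards [hf] with y hy
    simp [hy]
  simp [this]

theorem weakNorm_zero {n : ℕ} (μ : Measure (Euc n)) {p : ℝ} (hp : 0 < p) {g : Euc n → ℝ≥0∞}
    (hg : ∀ x, g x = 0) : weakNorm μ p g = 0 := by
  simp [weakNorm, hg, hp]

/-- In dimension zero the Bochner-Riesz operators are the identity. -/
theorem brOp_dim_zero (δ R : ℝ) (f : Euc 0 → ℂ) : brOp 0 δ R f = f := by
  funext x
  have hK : brKernel 0 δ = fun _ => 1 := by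
    funext y
    rw [brKernel, Real.fourierInv_eq, volume_euclideanSpace_eq_dirac, integral_dirac]
    simp
  rw [brOp, volume_euclideanSpace_eq_dirac, integral_dirac, hK, Subsingleton.elim x 0]
  simp [dil]

/-! ### The bound in positive dimension -/

/-- The only property of `N` that is needed is that test functions decay faster than `|x|^(-n/p)`. -/
theorem exists_bound_dim_pos {m N : ℕ} {p δ : ℝ} {w : Euc (m + 1) → ℝ} (hp0 : 0 < p)
    (hp1 : p ≤ 1) (hδ : ((m + 1 : ℕ) : ℝ) / p - (((m + 1 : ℕ) : ℝ) + 1) / 2 < δ) (hw : IsA1 w)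
    (hN : ((m + 1 : ℕ) : ℝ) / p < ((N + (m + 1) + 1 : ℕ) : ℝ)) :
    ∃ C : ℝ≥0, 0 < C ∧ ∀ R : ℝ, 0 < R → ∀ f : Euc (m + 1) → ℂ,
      whNorm N (wMeasure w) p (brOp (m + 1) δ R f) ≤ (C : ℝ≥0∞) * whNorm N (wMeasure w) p f := by
  set d : ℝ := ((m + 1 : ℕ) : ℝ) with hd
  have hdm : d = m + 1 := by rw [hd]; push_cast; ring
  have hd0 : 0 < d := by rw [hdm]; positivity
  have hdp : d ≤ d / p := by
    rw [le_div_iff₀ hp0]; exact mul_le_of_le_one_right hd0.le hp1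
  have hδ0 : 0 < δ := by
    have : (0 : ℝ) ≤ m := by positivity
    linarith
  -- `b > n / p` bounds the decay of both the kernel and the test functions
  set b : ℝ := min (δ + m / 2 + 1) ((N + (m + 1) + 1 : ℕ) : ℝ) with hb
  have hbp : d / p < b := lt_min (by linarith) hN
  have hb0 : 0 < b := lt_trans (by positivity) hbp
  obtain ⟨q, hq1, hq2⟩ : ∃ q, d / b < q ∧ q < p :=
    exists_between (by rwa [div_lt_comm₀ hb0 hp0])
  have hq0 : 0 < q := lt_trans (by positivity) hq1
  obtain ⟨C₁, hC₁, B, hB, hpt⟩ := exists_grandMax_brOp_le (m := m) (N := N) (b := b) hδ0 hq0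
    (hq2.trans_le hp1) (by rwa [← hd, div_lt_comm₀ hq0 hb0]) (min_le_left _ _) (min_le_right _ _)
  obtain ⟨C₂, hC₂, hmax⟩ := hw.exists_weakNorm_bMax_le hq0 hq2
  lift C₁ to ℝ≥0 using hC₁
  lift C₂ to ℝ≥0 using hC₂
  have hBn : 0 < B.toNNReal := Real.toNNReal_pos.2 hB
  refine ⟨(C₁ + 1) * (C₂ + 1) * B.toNNReal, by positivity, fun R hR f => ?_⟩
  by_cases hae : ∀ᵐ x, brOp (m + 1) δ R f x = 0
  · rw [whNorm, weakNorm_zero _ hp0 (grandMax_eq_zero hae)]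
    exact zero_le
  have hf := isGood_of_brOp hδ0 hR hae
  have hm : Measurable fun z => (B.toNNReal : ℝ≥0∞) * grandMax N f z :=
    (measurable_grandMax (by positivity) hf).const_mul _
  calc _ ≤ weakNorm (wMeasure w) p (fun x => ((C₁ + 1 : ℝ≥0) : ℝ≥0∞) *
        bMax (fun z => ((B.toNNReal : ℝ≥0∞) * grandMax N f z) ^ q) x ^ (1 / q)) := by
        refine weakNorm_mono _ hp0 fun x => (hpt R hR f hf x).trans ?_
        refine mul_le_mul_left ?_ _
        exact_mod_cast le_self_add
    _ ≤ ((C₁ + 1 : ℝ≥0) : ℝ≥0∞) * weakNorm (wMeasure w) p (fun x =>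
        bMax (fun z => ((B.toNNReal : ℝ≥0∞) * grandMax N f z) ^ q) x ^ (1 / q)) :=
        weakNorm_const_mul_le _ (by positivity) _
    _ ≤ ((C₁ + 1 : ℝ≥0) : ℝ≥0∞) * (((C₂ + 1 : ℝ≥0) : ℝ≥0∞) *
        ((B.toNNReal : ℝ≥0∞) * whNorm N (wMeasure w) p f)) := by
        refine mul_le_mul_right ((hmax _ hm).trans (mul_le_mul' ?_ ?_)) _
        · exact_mod_cast le_self_add
        · exact weakNorm_const_mul_le _ hBn _
    _ = _ := by push_cast; ring

/-- Let `0 < p ≤ 1`, `δ > n/p - (n+1)/2` and `w ∈ A₁`, and suppose that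
`δ - (n-1)/2` is not a positive integer. Then there is a constant `C > 0`, independent of
`f` and `R`, such that for every `0 < R < ∞` and every `f ∈ WH^p_w(ℝⁿ)` one has
`‖T^δ_R f‖_{WH^p_w} ≤ C ‖f‖_{WH^p_w}`. -/
theorem bochnerRiesz_weighted_weakHardy_bounded (n : ℕ) (p δ : ℝ) (w : Euc n → ℝ)
    (hp0 : 0 < p) (hp1 : p ≤ 1)
    (hδ : (n : ℝ) / p - ((n : ℝ) + 1) / 2 < δ)
    (hδ' : ¬∃ m : ℕ, 0 < m ∧ δ - ((n : ℝ) - 1) / 2 = (m : ℝ))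
    (hw : IsA1 w) :
    ∃ C : ℝ≥0, 0 < C ∧ ∀ (R : ℝ), 0 < R → ∀ f : Euc n → ℂ,
      whNorm (⌊(n : ℝ) * (criticalIndex w / p - 1)⌋.toNat) (wMeasure w) p f ≠ ⊤ →
      whNorm (⌊(n : ℝ) * (criticalIndex w / p - 1)⌋.toNat) (wMeasure w) p (brOp n δ R f) ≤
        (C : ℝ≥0∞) * whNorm (⌊(n : ℝ) * (criticalIndex w / p - 1)⌋.toNat) (wMeasure w) p f := by
  rcases n with _ | m
  · refine ⟨1, one_pos, fun R _ f _ => ?_⟩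
    rw [brOp_dim_zero, ENNReal.coe_one, one_mul]
  · set N := ⌊((m + 1 : ℕ) : ℝ) * (criticalIndex w / p - 1)⌋.toNat with hN
    have hNlt : ((m + 1 : ℕ) : ℝ) / p < ((N + (m + 1) + 1 : ℕ) : ℝ) := by
      have h1 : ((m + 1 : ℕ) : ℝ) * (criticalIndex w / p - 1) < N + 1 := by
        refine (Int.lt_floor_add_one _).trans_le ?_
        have : (⌊((m + 1 : ℕ) : ℝ) * (criticalIndex w / p - 1)⌋ : ℤ) ≤ (N : ℤ) :=
          Int.self_le_toNat _
        gcongr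
        exact_mod_cast this
      have h2 : ((m + 1 : ℕ) : ℝ) / p ≤ ((m + 1 : ℕ) : ℝ) * (criticalIndex w / p) := by
        rw [← mul_div_assoc]
        gcongr
        exact le_mul_of_one_le_right (by positivity) hw.one_le_criticalIndex
      push_cast at h1 h2 ⊢
      linarith
    obtain ⟨C, hC, h⟩ := exists_bound_dim_pos hp0 hp1 hδ hw hNlt
    exact ⟨C, hC, fun R hR f _ => h R hR f⟩
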